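/- arXiv:1805.01121 — 2 statements merged into one kernel-verified Lean document; each statement's English description precedes it below -/
import Mathlib

section
/- Let n be a positive integer, let τ be a complex number with Im(τ) > 0, set q = e^{πiτ} and τ' = -1/τ. Then (1/n) · (θ₁'(0 | τ'/n) / θ₁'(0 | τ')) · (θ₁(π/2 | τ') / θ₁(π/2 | τ'/n)) = q^{(n-1)/4} · ((q^{2n}; q^{2n})_∞)² ((q; q²)_∞)² / (((q^n; q^{2n})_∞)² ((q²; q²)_∞)²), where θ₁' denotes the derivative of θ₁(z | τ) with respect to z and q^{(n-1)/4} denotes e^{πiτ(n-1)/4}. -/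
open Complex

/-- Infinite q-Pochhammer symbol `(a; q)_∞ = ∏_{i=0}^∞ (1 - a qⁱ)`. -/
noncomputable def qPoch (a q : ℂ) : ℂ := ∏' i : ℕ, (1 - a * q ^ i)

/-- Jacobi's first theta function
`θ₁(z | τ) = 2 ∑_{n=0}^∞ (-1)ⁿ e^{πiτ(2n+1)²/4} sin((2n+1)z)`. -/
noncomputable def theta1 (z τ : ℂ) : ℂ :=
  2 * ∑' n : ℕ, (-1 : ℂ) ^ n * Complex.exp (Real.pi * Complex.I * τ * (2 * n + 1) ^ 2 / 4) *
    Complex.sin ((2 * n + 1) * z)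

/-- The derivative of `θ₁(z | τ)` with respect to `z`. -/
noncomputable def theta1' (z τ : ℂ) : ℂ := deriv (fun w => theta1 w τ) z

open Filter Topology Finset

section FinitePochhammer

/-- The finite Pochhammer symbol `(p; p)_k`. -/
noncomputable def pochFin (p : ℂ) (k : ℕ) : ℂ := ∏ i ∈ range k, (1 - p * p ^ i)

/-- The reciprocal `1 / (p; p)_m`, extended by zero to negative `m`. -/
noncomputable def pochRecip (p : ℂ) (m : ℤ) : ℂ := if m < 0 then 0 else (pochFin p m.toNat)⁻¹

/-- The central Gaussian binomial coefficient `[2N, N + n]_p`, for `n : ℤ`. -/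
noncomputable def gaussCentral (p : ℂ) (N : ℕ) (n : ℤ) : ℂ :=
  pochFin p (2 * N) * pochRecip p (N + n) * pochRecip p (N - n)

variable {p a : ℂ}

lemma one_sub_mul_pow_ne_zero (hp : ‖p‖ < 1) (ha : ‖a‖ < 1) (i : ℕ) : 1 - a * p ^ i ≠ 0 := by
  intro h
  have h1 : a * p ^ i = 1 := (sub_eq_zero.mp h).symm
  have h2 : ‖a * p ^ i‖ < 1 := by
    rw [norm_mul, norm_pow]
    exact mul_lt_one_of_nonneg_of_lt_one_left (norm_nonneg _) ha
      (pow_le_one₀ (norm_nonneg _) hp.le)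
  simp [h1] at h2

lemma summable_norm_neg_mul_pow (hp : ‖p‖ < 1) : Summable fun i : ℕ ↦ ‖-(a * p ^ i)‖ := by
  simpa using (summable_geometric_of_lt_one (norm_nonneg p) hp).mul_left ‖a‖

lemma tendsto_prod_qPoch (hp : ‖p‖ < 1) :
    Tendsto (fun k ↦ ∏ i ∈ range k, (1 - a * p ^ i)) atTop (𝓝 (qPoch a p)) := by
  simpa [qPoch, sub_eq_add_neg] using
    (multipliable_one_add_of_summable
      (summable_norm_neg_mul_pow (a := a) hp)).hasProd.tendsto_prod_nat

lemma qPoch_ne_zero (hp : ‖p‖ < 1) (ha : ‖a‖ < 1) : qPoch a p ≠ 0 := by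
  simpa [qPoch, sub_eq_add_neg] using
    tprod_one_add_ne_zero_of_summable (f := fun i : ℕ ↦ -(a * p ^ i))
      (fun i ↦ by simpa [sub_eq_add_neg] using one_sub_mul_pow_ne_zero hp ha i)
      (summable_norm_neg_mul_pow hp)

lemma tendsto_pochFin (hp : ‖p‖ < 1) : Tendsto (pochFin p) atTop (𝓝 (qPoch p p)) :=
  tendsto_prod_qPoch hp

lemma pochRecip_sub_one (hp : ‖p‖ < 1) (m : ℤ) :
    pochRecip p (m - 1) = (1 - p ^ m) * pochRecip p m := by
  rcases lt_trichotomy m 0 with h | rfl | h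
  · simp [pochRecip, h, show m < 1 by lia]
  · simp [pochRecip]
  · obtain ⟨k, rfl⟩ : ∃ k : ℕ, m = k + 1 := ⟨(m - 1).toNat, by lia⟩
    have h1 : ((k : ℤ) + 1).toNat = k + 1 := by lia
    have h2 := one_sub_mul_pow_ne_zero hp hp k
    have h3 : p ^ ((k : ℤ) + 1) = p * p ^ k := by
      rw [← pow_succ']
      exact_mod_cast zpow_natCast p (k + 1)
    simp only [pochRecip, add_sub_cancel_right, h1, h3, pochFin, prod_range_succ, Int.toNat_natCast,
      if_neg (show ¬ (k : ℤ) < 0 by lia), if_neg (show ¬ (k : ℤ) + 1 < 0 by lia)]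
    field_simp

lemma tendsto_pochRecip (hp : ‖p‖ < 1) :
    Tendsto (pochRecip p) atTop (𝓝 (qPoch p p)⁻¹) := by
  have h : Tendsto (fun m : ℤ ↦ (pochFin p m.toNat)⁻¹) atTop (𝓝 (qPoch p p)⁻¹) :=
    ((tendsto_pochFin hp).inv₀ (qPoch_ne_zero hp hp)).comp
      (tendsto_atTop.mpr fun b ↦ (eventually_ge_atTop (b : ℤ)).mono fun m hm ↦ by lia)
  refine h.congr' ((eventually_ge_atTop 0).mono fun m hm ↦ ?_)
  rw [pochRecip, if_neg (by lia)]

lemma gaussCentral_succ (hp : ‖p‖ < 1) (h0 : p ≠ 0) (N : ℕ) (n : ℤ) :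
    gaussCentral p (N + 1) n = (1 + p ^ (2 * N + 1)) * gaussCentral p N n +
      p ^ ((N : ℤ) + 1 - n) * gaussCentral p N (n - 1) +
      p ^ ((N : ℤ) + 1 + n) * gaussCentral p N (n + 1) := by
  have hA := pochRecip_sub_one hp (N + 1 + n)
  have hA' := pochRecip_sub_one hp (N + n)
  have hB := pochRecip_sub_one hp (N + 1 - n)
  have hB' := pochRecip_sub_one hp (N - n)
  rw [show (N : ℤ) + 1 + n - 1 = N + n by ring] at hA
  rw [show (N : ℤ) + 1 - n - 1 = N - n by ring] at hB
  have ea : p ^ ((N : ℤ) + n) = p ^ ((N : ℤ) + 1 + n) / p := by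
    rw [div_eq_mul_inv, ← zpow_sub_one₀ h0]; ring_nf
  have eb : p ^ ((N : ℤ) - n) = p ^ ((N : ℤ) + 1 - n) / p := by
    rw [div_eq_mul_inv, ← zpow_sub_one₀ h0]; ring_nf
  have eab : p ^ (2 * N + 1) = p ^ ((N : ℤ) + 1 + n) * p ^ ((N : ℤ) + 1 - n) / p := by
    rw [← zpow_add₀ h0, div_eq_mul_inv, ← zpow_sub_one₀ h0, ← zpow_natCast]; push_cast; ring_nf
  have eP : pochFin p (2 * (N + 1)) =
      pochFin p (2 * N) * (1 - p ^ (2 * N + 1)) * (1 - p * p ^ (2 * N + 1)) := by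
    rw [show 2 * (N + 1) = 2 * N + 1 + 1 by ring, pochFin, prod_range_succ, prod_range_succ,
      pochFin]
    ring
  simp only [gaussCentral]
  rw [eP, eab]
  push_cast
  rw [show (N : ℤ) + (n - 1) = N + n - 1 by ring, show (N : ℤ) - (n - 1) = N + 1 - n by ring,
    show (N : ℤ) + (n + 1) = N + 1 + n by ring, show (N : ℤ) - (n + 1) = N - n - 1 by ring,
    hA', hB', hA, hB, ea, eb]
  field_simp
  ring

lemma gaussCentral_zero (n : ℤ) : gaussCentral p 0 n = if n = 0 then 1 else 0 := by
  rcases lt_trichotomy n 0 with h | rfl | h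
  · simp [gaussCentral, pochRecip, h, h.ne]
  · simp [gaussCentral, pochRecip, pochFin]
  · simp [gaussCentral, pochRecip, h, h.ne']

lemma gaussCentral_eq_zero {N : ℕ} {n : ℤ} (hn : n ∉ Icc (-N : ℤ) N) :
    gaussCentral p N n = 0 := by
  rw [mem_Icc, not_and_or, not_le, not_le] at hn
  rcases hn with h | h
  · simp [gaussCentral, pochRecip, show (N : ℤ) + n < 0 by lia]
  · simp [gaussCentral, pochRecip, show (N : ℤ) < n by lia]

lemma tendsto_gaussCentral (hp : ‖p‖ < 1) (n : ℤ) :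
    Tendsto (fun N ↦ gaussCentral p N n) atTop (𝓝 (qPoch p p)⁻¹) := by
  have h1 : Tendsto (fun N : ℕ ↦ pochFin p (2 * N)) atTop (𝓝 (qPoch p p)) :=
    (tendsto_pochFin hp).comp (tendsto_id.const_mul_atTop' two_pos)
  have h2 : Tendsto (fun N : ℕ ↦ pochRecip p (N + n)) atTop (𝓝 (qPoch p p)⁻¹) :=
    (tendsto_pochRecip hp).comp (tendsto_atTop_add_const_right _ _ tendsto_natCast_atTop_atTop)
  have h3 : Tendsto (fun N : ℕ ↦ pochRecip p (N - n)) atTop (𝓝 (qPoch p p)⁻¹) :=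
    (tendsto_pochRecip hp).comp (tendsto_atTop_add_const_right _ _ tendsto_natCast_atTop_atTop)
  simpa [gaussCentral, qPoch_ne_zero hp hp] using (h1.mul h2).mul h3

lemma exists_norm_gaussCentral_le (hp : ‖p‖ < 1) : ∃ C, ∀ N n, ‖gaussCentral p N n‖ ≤ C := by
  obtain ⟨C, hC⟩ := (Metric.isBounded_range_of_tendsto _ (tendsto_pochFin hp)).exists_norm_le
  obtain ⟨D, hD⟩ := (Metric.isBounded_range_of_tendsto _
    ((tendsto_pochFin hp).inv₀ (qPoch_ne_zero hp hp))).exists_norm_le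
  have hC' (k) : ‖pochFin p k‖ ≤ C := hC _ ⟨k, rfl⟩
  have hD' (k) : ‖(pochFin p k)⁻¹‖ ≤ D := hD _ ⟨k, rfl⟩
  have hD0 : 0 ≤ D := (norm_nonneg _).trans (hD' 0)
  have hR (m) : ‖pochRecip p m‖ ≤ D := by
    rw [pochRecip]
    split_ifs
    · simpa using hD0
    · exact hD' _
  refine ⟨C * D * D, fun N n ↦ ?_⟩
  rw [gaussCentral, norm_mul, norm_mul]
  gcongr
  · exact mul_nonneg ((norm_nonneg _).trans (hC' 0)) hD0
  · exact (norm_nonneg _).trans (hC' 0)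
  · exact hC' _
  · exact hR _
  · exact hR _

end FinitePochhammer

section TripleProduct

open scoped Real

/-- The finite Jacobi product `∏_{i < N} (1 + w q^{2i+1}) (1 + w⁻¹ q^{2i+1})` with
`w = e^{2πiz}` and `q = e^{πiτ}`. -/
noncomputable def jacobiProd (N : ℕ) (z τ : ℂ) : ℂ :=
  ∏ i ∈ range N, (1 + cexp (2 * π * I * z) * cexp (π * I * τ) ^ (2 * i + 1)) *
    (1 + cexp (-(2 * π * I * z)) * cexp (π * I * τ) ^ (2 * i + 1))

lemma norm_exp_pi_mul_I_lt_one {τ : ℂ} (hτ : 0 < τ.im) : ‖cexp (π * I * τ)‖ < 1 := by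
  rw [norm_exp, Real.exp_lt_one_iff]
  simpa using mul_pos Real.pi_pos hτ

lemma norm_exp_pi_mul_I_sq_lt_one {τ : ℂ} (hτ : 0 < τ.im) : ‖cexp (π * I * τ) ^ 2‖ < 1 := by
  rw [norm_pow]
  exact pow_lt_one₀ (norm_nonneg _) (norm_exp_pi_mul_I_lt_one hτ) two_ne_zero

lemma hasSum_jacobiProd (N : ℕ) (z : ℂ) {τ : ℂ} (hτ : 0 < τ.im) :
    HasSum (fun n ↦ gaussCentral (cexp (π * I * τ) ^ 2) N n * jacobiTheta₂_term n z τ)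
      (jacobiProd N z τ) := by
  set p := cexp (π * I * τ) ^ 2 with hp
  have hp1 : ‖p‖ < 1 := norm_exp_pi_mul_I_sq_lt_one hτ
  have hp0 : p ≠ 0 := pow_ne_zero _ (exp_ne_zero _)
  have hpz (m : ℤ) : p ^ m = cexp (2 * π * I * τ * m) := by
    rw [hp, ← exp_nat_mul, ← exp_int_mul]; push_cast; ring_nf
  have hQ (k : ℕ) : cexp (π * I * τ) ^ (2 * k + 1) = cexp (π * I * τ * (2 * k + 1)) := by
    rw [← exp_nat_mul]; push_cast; ring_nf
  induction N with
  | zero =>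
    convert! hasSum_ite_eq (0 : ℤ) (1 : ℂ) using 2 with n
    rw [gaussCentral_zero]
    split_ifs with h
    · simp [h, jacobiTheta₂_term]
    · simp
  | succ N ih =>
    have hl := (Equiv.hasSum_iff (Equiv.subRight (1 : ℤ))).mpr ih
    have hr := (Equiv.hasSum_iff (Equiv.addRight (1 : ℤ))).mpr ih
    have key := ((ih.mul_left (1 + p ^ (2 * N + 1))).add (hl.mul_left
      (cexp (2 * π * I * z) * cexp (π * I * τ) ^ (2 * N + 1)))).add (hr.mul_left
      (cexp (-(2 * π * I * z)) * cexp (π * I * τ) ^ (2 * N + 1)))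
    convert! key using 1
    · ext n
      have e1 : cexp (2 * π * I * z) * cexp (π * I * τ) ^ (2 * N + 1) *
          jacobiTheta₂_term (n - 1) z τ = p ^ ((N : ℤ) + 1 - n) * jacobiTheta₂_term n z τ := by
        rw [hpz, hQ, jacobiTheta₂_term, jacobiTheta₂_term, ← exp_add, ← exp_add, ← exp_add]
        push_cast; ring_nf
      have e2 : cexp (-(2 * π * I * z)) * cexp (π * I * τ) ^ (2 * N + 1) *
          jacobiTheta₂_term (n + 1) z τ = p ^ ((N : ℤ) + 1 + n) * jacobiTheta₂_term n z τ := by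
        rw [hpz, hQ, jacobiTheta₂_term, jacobiTheta₂_term, ← exp_add, ← exp_add, ← exp_add]
        push_cast; ring_nf
      rw [gaussCentral_succ hp1 hp0]
      simp only [Function.comp_apply, Equiv.subRight_apply, Equiv.coe_addRight]
      linear_combination (-gaussCentral p N (n - 1)) * e1 - gaussCentral p N (n + 1) * e2
    · have e : cexp (2 * π * I * z) * cexp (-(2 * π * I * z)) = 1 := by
        rw [← exp_add]; simp
      rw [jacobiProd, prod_range_succ, ← jacobiProd, hp]
      linear_combination (jacobiProd N z τ * (cexp (π * I * τ) ^ (2 * N + 1)) ^ 2) * e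

lemma hasDerivAt_jacobiProd (N : ℕ) (z : ℂ) {τ : ℂ} (hτ : 0 < τ.im) :
    HasDerivAt (jacobiProd N · τ)
      (∑' n, gaussCentral (cexp (π * I * τ) ^ 2) N n * jacobiTheta₂'_term n z τ) z := by
  have h1 : (jacobiProd N · τ) = fun z ↦ ∑ n ∈ Icc (-N : ℤ) N,
      gaussCentral (cexp (π * I * τ) ^ 2) N n * jacobiTheta₂_term n z τ := by
    ext z
    exact (hasSum_jacobiProd N z hτ).unique (hasSum_sum_of_ne_finset_zero fun n hn ↦ by
      rw [gaussCentral_eq_zero hn, zero_mul])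
  rw [h1, tsum_eq_sum (s := Icc (-N : ℤ) N) fun n hn ↦ by rw [gaussCentral_eq_zero hn, zero_mul]]
  refine HasDerivAt.fun_sum fun n _ ↦ HasDerivAt.const_mul _ ?_
  have h2 : HasDerivAt (fun z : ℂ ↦ 2 * π * I * n * z + π * I * n ^ 2 * τ)
      (2 * π * I * n) z := by
    simpa using ((hasDerivAt_id z).const_mul (2 * π * I * n : ℂ)).add_const (π * I * n ^ 2 * τ)
  convert! h2.cexp using 1
  rw [jacobiTheta₂'_term, jacobiTheta₂_term, mul_comm]

lemma tendsto_tsum_gaussCentral_mul {p : ℂ} (hp : ‖p‖ < 1) {f : ℤ → ℂ} (hf : Summable f) :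
    Tendsto (fun N ↦ ∑' n, gaussCentral p N n * f n) atTop (𝓝 ((qPoch p p)⁻¹ * ∑' n, f n)) := by
  obtain ⟨C, hC⟩ := exists_norm_gaussCentral_le hp
  rw [← tsum_mul_left]
  refine tendsto_tsum_of_dominated_convergence (bound := fun n ↦ C * ‖f n‖) (hf.norm.mul_left C)
    (fun n ↦ (tendsto_gaussCentral hp n).mul_const _) (.of_forall fun N n ↦ ?_)
  rw [norm_mul]
  exact mul_le_mul_of_nonneg_right (hC N n) (norm_nonneg _)

lemma jacobiTheta₂_half {τ : ℂ} (hτ : 0 < τ.im) :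
    jacobiTheta₂ (1 / 2) τ = qPoch (cexp (π * I * τ) ^ 2) (cexp (π * I * τ) ^ 2) *
      qPoch (cexp (π * I * τ)) (cexp (π * I * τ) ^ 2) ^ 2 := by
  have hp := norm_exp_pi_mul_I_sq_lt_one hτ
  have h1 := tendsto_tsum_gaussCentral_mul hp (hasSum_jacobiTheta₂_term (1 / 2) hτ).summable
  have h2 := (tendsto_prod_qPoch (a := cexp (π * I * τ)) hp).pow 2
  have h3 := tendsto_nhds_unique h1 (h2.congr fun N ↦ ?_)
  · rw [← h3, ← jacobiTheta₂, mul_inv_cancel_left₀ (qPoch_ne_zero hp hp)]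
  · rw [(hasSum_jacobiProd N _ hτ).tsum_eq, jacobiProd, ← prod_pow]
    refine prod_congr rfl fun i _ ↦ ?_
    have e : 2 * π * I * (1 / 2) = π * I := by ring
    rw [e, exp_neg, exp_pi_mul_I]
    ring

lemma jacobiProd_succ (N : ℕ) (z τ : ℂ) :
    jacobiProd (N + 1) z τ = (1 + cexp (-(2 * π * I * z)) * cexp (π * I * τ)) *
      ((∏ i ∈ range (N + 1), (1 + cexp (2 * π * I * z) * cexp (π * I * τ) ^ (2 * i + 1))) *
      ∏ i ∈ range N, (1 + cexp (-(2 * π * I * z)) * cexp (π * I * τ) ^ (2 * (i + 1) + 1))) := by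
  rw [jacobiProd, prod_mul_distrib, prod_range_succ' (n := N)
    (f := fun i ↦ 1 + cexp (-(2 * π * I * z)) * cexp (π * I * τ) ^ (2 * i + 1))]
  simp only [mul_zero, zero_add, pow_one]
  ring

lemma exp_two_pi_mul_half (τ : ℂ) :
    cexp (2 * π * I * ((1 + τ) / 2)) = -cexp (π * I * τ) := by
  rw [show 2 * π * I * ((1 + τ) / 2) = π * I + π * I * τ by ring, exp_add, exp_pi_mul_I]
  ring

lemma jacobiTheta₂'_half {τ : ℂ} (hτ : 0 < τ.im) :
    jacobiTheta₂' ((1 + τ) / 2) τ =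
      2 * π * I * qPoch (cexp (π * I * τ) ^ 2) (cexp (π * I * τ) ^ 2) ^ 3 := by
  set q := cexp (π * I * τ)
  have hq0 : q ≠ 0 := exp_ne_zero _
  have hp : ‖q ^ 2‖ < 1 := norm_exp_pi_mul_I_sq_lt_one hτ
  have h1 := (tendsto_tsum_gaussCentral_mul hp
    (hasSum_jacobiTheta₂'_term ((1 + τ) / 2) hτ).summable).comp (tendsto_add_atTop_nat 1)
  have h2 := (((tendsto_pochFin hp).comp (tendsto_add_atTop_nat 1)).mul
    (tendsto_pochFin hp)).const_mul (2 * π * I)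
  have h3 := tendsto_nhds_unique h1 (h2.congr fun N ↦ ?_)
  · rw [← jacobiTheta₂', inv_mul_eq_iff_eq_mul₀ (qPoch_ne_zero hp hp)] at h3
    rw [h3]
    ring
  · have hw : cexp (2 * π * I * ((1 + τ) / 2)) = -q := exp_two_pi_mul_half τ
    have hw' : cexp (-(2 * π * I * ((1 + τ) / 2))) = -q⁻¹ := by rw [exp_neg, hw, inv_neg]
    have hlin : HasDerivAt (fun z : ℂ ↦ 1 + cexp (-(2 * π * I * z)) * q) (2 * π * I)
        ((1 + τ) / 2) := by
      have h := ((((hasDerivAt_id ((1 + τ) / 2)).const_mul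
        (2 * π * I : ℂ)).fun_neg.cexp.mul_const q).const_add 1)
      simp only [id, hw', mul_one] at h
      convert! h using 1
      field_simp
    have hd : DifferentiableAt ℂ (fun z ↦
        (∏ i ∈ range (N + 1), (1 + cexp (2 * π * I * z) * q ^ (2 * i + 1))) *
        ∏ i ∈ range N, (1 + cexp (-(2 * π * I * z)) * q ^ (2 * (i + 1) + 1)))
        ((1 + τ) / 2) := by
      fun_prop
    have hprod := hlin.fun_mul hd.hasDerivAt
    simp only [hw, hw', neg_mul, inv_mul_cancel₀ hq0, add_neg_cancel, zero_mul, add_zero] at hprod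
    have h4 := hasDerivAt_jacobiProd (N + 1) ((1 + τ) / 2) hτ
    simp only [jacobiProd_succ] at h4
    simp only [Function.comp_apply]
    rw [h4.unique hprod, pochFin, pochFin]
    congr 2
    · exact prod_congr rfl fun i _ ↦ by ring
    · exact prod_congr rfl fun i _ ↦ by field_simp; ring

lemma jacobiTheta₂_half_add (τ : ℂ) : jacobiTheta₂ ((1 + τ) / 2) τ = 0 := by
  have h : jacobiTheta₂ ((1 + τ) / 2) τ = -jacobiTheta₂ ((1 + τ) / 2) τ := by
    have h1 := jacobiTheta₂_add_left' ((1 - τ) / 2) τ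
    rw [show (1 - τ) / 2 + τ = (1 + τ) / 2 by ring,
      show (1 - τ) / 2 = -((1 + τ) / 2) + 1 by ring, jacobiTheta₂_add_left,
      jacobiTheta₂_neg_left,
      show -(π : ℂ) * I * (τ + 2 * (-((1 + τ) / 2) + 1)) = -(π * I) by ring, exp_neg,
      exp_pi_mul_I] at h1
    convert! h1 using 1
    norm_num
  exact self_eq_neg.mp h

end TripleProduct

section Theta1

open scoped Real

lemma theta1_eq_jacobiTheta₂ (z : ℂ) {τ : ℂ} (hτ : 0 < τ.im) :
    theta1 z τ = -I * cexp (π * I * τ / 4) *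
      (cexp (I * z) * jacobiTheta₂ (z / π + (1 + τ) / 2) τ) := by
  have hπ : (π : ℂ) ≠ 0 := ofReal_ne_zero.mpr Real.pi_ne_zero
  have h := ((hasSum_jacobiTheta₂_term (z / π + (1 + τ) / 2) hτ).nat_add_neg_add_one.mul_left
    (-I * cexp (π * I * τ / 4) * cexp (I * z))).tsum_eq
  rw [theta1, ← tsum_mul_left, ← mul_assoc _ (cexp (I * z)), ← h]
  refine tsum_congr fun n ↦ ?_
  have hs : (-1 : ℂ) ^ n = cexp (π * I * n) := by
    rw [← exp_pi_mul_I, ← exp_nat_mul, mul_comm]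
  have h1 : cexp (π * I * τ / 4) * cexp (I * z) * jacobiTheta₂_term n (z / π + (1 + τ) / 2) τ =
      (-1) ^ n * cexp (π * I * τ * (2 * n + 1) ^ 2 / 4) * cexp ((2 * n + 1) * z * I) := by
    rw [jacobiTheta₂_term, hs, ← exp_add, ← exp_add, ← exp_add, ← exp_add]
    congr 1
    push_cast
    field_simp
    ring
  have h2 : cexp (π * I * τ / 4) * cexp (I * z) *
      jacobiTheta₂_term (-(n + 1)) (z / π + (1 + τ) / 2) τ =
      -((-1) ^ n * cexp (π * I * τ * (2 * n + 1) ^ 2 / 4) * cexp (-((2 * n + 1) * z) * I)) := by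
    have hs' : -(-1 : ℂ) ^ n = cexp (-(π * I * (n + 1))) := by
      rw [mul_add, mul_one, exp_neg, exp_add, ← hs, exp_pi_mul_I, mul_neg_one, inv_neg, ← inv_pow,
        inv_neg_one]
    rw [← neg_mul, ← neg_mul, hs', jacobiTheta₂_term, ← exp_add, ← exp_add, ← exp_add, ← exp_add]
    congr 1
    push_cast
    field_simp
    ring
  rw [Complex.sin]
  linear_combination I * h1 + I * h2

lemma theta1_pi_div_two {τ : ℂ} (hτ : 0 < τ.im) :
    theta1 (π / 2) τ = cexp (π * I * τ / 4) * jacobiTheta₂ (τ / 2) τ := by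
  have hπ : (π : ℂ) ≠ 0 := ofReal_ne_zero.mpr Real.pi_ne_zero
  rw [theta1_eq_jacobiTheta₂ _ hτ, show (π : ℂ) / 2 / π + (1 + τ) / 2 = τ / 2 + 1 by
    field_simp; ring, jacobiTheta₂_add_left, mul_comm I, exp_pi_div_two_mul_I]
  linear_combination (-cexp (π * I * τ / 4) * jacobiTheta₂ (τ / 2) τ) * I_sq

lemma theta1'_zero {τ : ℂ} (hτ : 0 < τ.im) :
    theta1' 0 τ = -I * cexp (π * I * τ / 4) * (jacobiTheta₂' ((1 + τ) / 2) τ / π) := by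
  have hfun : (fun w ↦ theta1 w τ) = fun w ↦ -I * cexp (π * I * τ / 4) *
      (cexp (I * w) * jacobiTheta₂ (w / π + (1 + τ) / 2) τ) :=
    funext fun w ↦ theta1_eq_jacobiTheta₂ w hτ
  have hlin : HasDerivAt (fun w : ℂ ↦ w / π + (1 + τ) / 2) (1 / π) 0 :=
    ((hasDerivAt_id (0 : ℂ)).div_const (π : ℂ)).add_const _
  have hexp : HasDerivAt (fun w : ℂ ↦ cexp (I * w)) (cexp (I * 0) * (I * 1)) 0 :=
    ((hasDerivAt_id (0 : ℂ)).const_mul I).cexp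
  have hth := (hasDerivAt_jacobiTheta₂_fst (0 / π + (1 + τ) / 2) hτ).comp (0 : ℂ) hlin
  have h := (hexp.fun_mul hth).const_mul (-I * cexp (π * I * τ / 4))
  rw [theta1', hfun]
  refine h.deriv.trans ?_
  simp only [Function.comp_apply, zero_div, zero_add, jacobiTheta₂_half_add, mul_zero, exp_zero,
    one_mul, mul_one_div]

lemma im_neg_one_div_pos {τ : ℂ} (hτ : 0 < τ.im) : 0 < (-1 / τ).im := by
  simpa [div_eq_mul_inv] using UpperHalfPlane.im_inv_neg_coe_pos ⟨τ, hτ⟩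

/-- The imaginary transformation of `θ₁(π/2 | ·)`, combined with the product formula for the
resulting theta constant. -/
lemma theta1_pi_div_two_neg_one_div {τ : ℂ} (hτ : 0 < τ.im) :
    theta1 (π / 2) (-1 / τ) = (-I * τ) ^ (1 / 2 : ℂ) *
      (qPoch (cexp (π * I * τ) ^ 2) (cexp (π * I * τ) ^ 2) *
        qPoch (cexp (π * I * τ)) (cexp (π * I * τ) ^ 2) ^ 2) := by
  have hτ0 : τ ≠ 0 := by rintro rfl; simp at hτ
  have hs : (-I * τ) ^ (1 / 2 : ℂ) ≠ 0 := by simp [cpow_eq_zero_iff, hτ0]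
  have h := jacobiTheta₂_functional_equation (-(1 / 2)) τ
  rw [jacobiTheta₂_neg_left, jacobiTheta₂_half hτ,
    show -(π : ℂ) * I * (-(1 / 2)) ^ 2 / τ = π * I * (-1 / τ) / 4 by ring,
    show -(1 / 2) / τ = -1 / τ / 2 by ring] at h
  rw [theta1_pi_div_two (im_neg_one_div_pos hτ), h]
  field_simp

/-- The imaginary transformation of `θ₁'(0 | ·)`, combined with Jacobi's product formula
`θ₁'(0 | τ) = 2 q^{1/4} (q²; q²)_∞³`. -/
lemma theta1'_zero_neg_one_div {τ : ℂ} (hτ : 0 < τ.im) :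
    theta1' 0 (-1 / τ) = (-I * τ) ^ (1 / 2 : ℂ) * (-I * τ) *
      (2 * cexp (π * I * τ / 4) * qPoch (cexp (π * I * τ) ^ 2) (cexp (π * I * τ) ^ 2) ^ 3) := by
  have hτ0 : τ ≠ 0 := by rintro rfl; simp at hτ
  have hπ : (π : ℂ) ≠ 0 := ofReal_ne_zero.mpr Real.pi_ne_zero
  have hs : (-I * τ) ^ (1 / 2 : ℂ) ≠ 0 := by simp [cpow_eq_zero_iff, hτ0]
  have h := jacobiTheta₂'_functional_equation ((τ - 1) / 2) τ
  have hz : (τ - 1) / 2 / τ = (1 + -1 / τ) / 2 := by field_simp; ring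
  have he : cexp (-π * I * ((τ - 1) / 2) ^ 2 / τ) =
      cexp (π * I * (-1 / τ) / 4) * I / cexp (π * I * τ / 4) := by
    have h' : -π * I * ((τ - 1) / 2) ^ 2 / τ =
        π * I * (-1 / τ) / 4 + π / 2 * I - π * I * τ / 4 := by
      field_simp
      ring
    rw [h', exp_sub, exp_add, exp_pi_div_two_mul_I]
  rw [hz, jacobiTheta₂_half_add, he, ← jacobiTheta₂'_add_left,
    show (τ - 1) / 2 + 1 = (1 + τ) / 2 by ring, jacobiTheta₂'_half hτ] at h
  rw [theta1'_zero (im_neg_one_div_pos hτ)]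
  have he0 := exp_ne_zero (π * I * τ / 4)
  generalize jacobiTheta₂' ((1 + -1 / τ) / 2) (-1 / τ) = D at h ⊢
  field_simp at h ⊢
  linear_combination h

lemma theta1'_div_theta1_neg_one_div {τ : ℂ} (hτ : 0 < τ.im) :
    theta1' 0 (-1 / τ) / theta1 (π / 2) (-1 / τ) =
      -I * τ * (2 * cexp (π * I * τ / 4) *
        qPoch (cexp (π * I * τ) ^ 2) (cexp (π * I * τ) ^ 2) ^ 2 /
          qPoch (cexp (π * I * τ)) (cexp (π * I * τ) ^ 2) ^ 2) := by
  have hτ0 : τ ≠ 0 := by rintro rfl; simp at hτ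
  have hs : (-I * τ) ^ (1 / 2 : ℂ) ≠ 0 := by simp [cpow_eq_zero_iff, hτ0]
  have hp := norm_exp_pi_mul_I_sq_lt_one hτ
  have h1 := qPoch_ne_zero hp hp
  have h2 := qPoch_ne_zero hp (norm_exp_pi_mul_I_lt_one hτ)
  rw [theta1'_zero_neg_one_div hτ, theta1_pi_div_two_neg_one_div hτ]
  field_simp

end Theta1

theorem theta1_deriv_quotient (n : ℕ) (hn : 0 < n) (τ : ℂ) (hτ : 0 < τ.im)
    (q : ℂ) (hq : q = Complex.exp (Real.pi * Complex.I * τ))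
    (τ' : ℂ) (hτ' : τ' = -1 / τ) :
    (1 / (n : ℂ)) * (theta1' 0 (τ' / n) / theta1' 0 τ') *
        (theta1 ((Real.pi : ℂ) / 2) τ' / theta1 ((Real.pi : ℂ) / 2) (τ' / n)) =
      Complex.exp (Real.pi * Complex.I * τ * ((n : ℂ) - 1) / 4) *
        (qPoch (q ^ (2 * n)) (q ^ (2 * n))) ^ 2 * (qPoch q (q ^ 2)) ^ 2 /
        ((qPoch (q ^ n) (q ^ (2 * n))) ^ 2 * (qPoch (q ^ 2) (q ^ 2)) ^ 2) := by
  have hn0 : (n : ℂ) ≠ 0 := Nat.cast_ne_zero.mpr hn.ne'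
  have hτ0 : τ ≠ 0 := by rintro rfl; simp at hτ
  have hnτ : 0 < ((n : ℂ) * τ).im := by
    simpa using mul_pos (Nat.cast_pos.mpr hn) hτ
  have hqn : cexp (Real.pi * I * (n * τ)) = q ^ n := by
    rw [hq, ← exp_nat_mul]; ring_nf
  have h1 := theta1'_div_theta1_neg_one_div hτ
  have h2 := theta1'_div_theta1_neg_one_div hnτ
  rw [← hq, ← hτ'] at h1
  rw [hqn, ← pow_mul, mul_comm n 2, show -1 / ((n : ℂ) * τ) = τ' / n by rw [hτ']; field_simp] at h2
  have hp : ‖q ^ 2‖ < 1 := hq ▸ norm_exp_pi_mul_I_sq_lt_one hτ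
  have hP := qPoch_ne_zero hp hp
  have hE := exp_ne_zero (Real.pi * I * τ / 4)
  have hexp : cexp (Real.pi * I * τ * ((n : ℂ) - 1) / 4) =
      cexp (Real.pi * I * (n * τ) / 4) / cexp (Real.pi * I * τ / 4) := by
    rw [← exp_sub]; ring_nf
  calc _ = 1 / (n : ℂ) * (theta1' 0 (τ' / n) / theta1 (Real.pi / 2) (τ' / n)) /
        (theta1' 0 τ' / theta1 (Real.pi / 2) τ') := by
        simp only [div_eq_mul_inv, mul_inv, inv_inv]; ring
    _ = _ := by
        rw [h1, h2, hexp]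
        simp only [div_eq_mul_inv, mul_inv, inv_inv]
        field_simp
end

section
/- With q = e^{-2π} and a = π^{1/4}/Γ(3/4), one has Γ_q(1/4) · Γ_q(3/4) = (1 - e^{-2π}) · a² · 2^{-17/16} · e^{3π/16} · (√2 + 1)^{1/4}, where Γ denotes the classical gamma function. -/
/-- Infinite q-Pochhammer symbol `(a; q)_∞ = ∏_{i=0}^∞ (1 - a qⁱ)` (real version). -/
noncomputable def qPochR (a q : ℝ) : ℝ := ∏' i : ℕ, (1 - a * q ^ i)

/-- The q-gamma function `Γ_q(z) = ((q;q)_∞ / (q^z;q)_∞) (1-q)^{1-z}` for `0 < q < 1`. -/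
noncomputable def qGamma (q z : ℝ) : ℝ :=
  qPochR q q / qPochR (q ^ z) q * (1 - q) ^ (1 - z)

open Filter Topology Set MeasureTheory

section QPochhammer

theorem multipliable_one_sub_mul_pow (a : ℝ) {q : ℝ} (hq0 : 0 ≤ q) (hq1 : q < 1) :
    Multipliable fun i : ℕ ↦ 1 - a * q ^ i := by
  have h : Summable fun i : ℕ ↦ -(a * q ^ i) :=
    ((summable_geometric_of_lt_one hq0 hq1).mul_left a).neg
  simpa [sub_eq_add_neg] using Real.multipliable_one_add_of_summable h

theorem qPochR_pos {a q : ℝ} (ha : a < 1) (hq0 : 0 ≤ q) (hq1 : q < 1) :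
    0 < qPochR a q := by
  have h : Summable fun i : ℕ ↦ -(a * q ^ i) :=
    ((summable_geometric_of_lt_one hq0 hq1).mul_left a).neg
  have hpos : ∀ i : ℕ, 0 < 1 - a * q ^ i := fun i ↦ by
    have h1 := pow_le_one₀ hq0 hq1.le (n := i)
    rcases (pow_nonneg hq0 i).eq_or_lt with h0 | h0
    · simp [← h0]
    · nlinarith
  have hlog := Real.summable_log_one_add_of_summable h
  simp only [← sub_eq_add_neg] at hlog
  rw [qPochR, ← Real.rexp_tsum_eq_tprod hpos hlog]
  exact Real.exp_pos _

/-- Splitting a `q`-Pochhammer symbol into its even and odd factors. -/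
theorem qPochR_eq_mul_sq (a : ℝ) {q : ℝ} (hq0 : 0 ≤ q) (hq1 : q < 1) :
    qPochR a q = qPochR a (q ^ 2) * qPochR (a * q) (q ^ 2) := by
  have h0 : 0 ≤ q ^ 2 := by positivity
  have h1 : q ^ 2 < 1 := by nlinarith
  have he := multipliable_one_sub_mul_pow a h0 h1
  have ho := multipliable_one_sub_mul_pow (a * q) h0 h1
  simp only [qPochR]
  rw [← tprod_even_mul_odd (f := fun i : ℕ ↦ 1 - a * q ^ i)
    (by simpa only [pow_mul] using he)
    (by simpa only [pow_succ', pow_mul, mul_assoc, mul_left_comm] using ho)]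
  simp only [pow_succ', pow_mul, mul_assoc]

theorem qPochR_eq_one_sub_mul (a : ℝ) {q : ℝ} (hq0 : 0 ≤ q) (hq1 : q < 1) :
    qPochR a q = (1 - a) * qPochR (a * q) q := by
  have h := multipliable_one_sub_mul_pow (a * q) hq0 hq1
  simp only [qPochR]
  rw [tprod_eq_zero_mul' (by simpa only [pow_succ', mul_assoc] using h)]
  simp only [pow_zero, mul_one, pow_succ', mul_assoc]

theorem qPochR_neg_mul_qPochR (a : ℝ) {q : ℝ} (hq0 : 0 ≤ q) (hq1 : q < 1) :
    qPochR (-a) q * qPochR a q = qPochR (a ^ 2) (q ^ 2) := by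
  rw [qPochR, qPochR, ← (multipliable_one_sub_mul_pow (-a) hq0 hq1).tprod_mul
    (multipliable_one_sub_mul_pow a hq0 hq1), qPochR]
  congr 1
  ext i
  ring

end QPochhammer

section TripleProduct

/-- The reciprocal `1 / (y; y)_m` of a finite `q`-Pochhammer symbol, extended by zero to
negative indices. -/
noncomputable def invQFactorial (y : ℝ) (m : ℤ) : ℝ :=
  if m < 0 then 0 else (∏ i ∈ Finset.range m.toNat, (1 - y * y ^ i))⁻¹

theorem prod_one_sub_pos {y : ℝ} (hy0 : 0 < y) (hy1 : y < 1) (n : ℕ) :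
    0 < ∏ i ∈ Finset.range n, (1 - y * y ^ i) :=
  Finset.prod_pos fun i _ ↦ by
    have := pow_lt_one₀ hy0.le hy1 (Nat.succ_ne_zero i)
    rw [pow_succ'] at this
    linarith

theorem invQFactorial_sub_one {y : ℝ} (hy0 : 0 < y) (hy1 : y < 1) (m : ℤ) :
    invQFactorial y (m - 1) = (1 - y ^ m) * invQFactorial y m := by
  rcases lt_trichotomy m 0 with h | rfl | h
  · simp [invQFactorial, h, show m - 1 < 0 by lia]
  · simp [invQFactorial]
  · obtain ⟨n, rfl⟩ : ∃ n : ℕ, m = n + 1 := ⟨(m - 1).toNat, by lia⟩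
    have h1 := (prod_one_sub_pos hy0 hy1 (n + 1)).ne'
    have e : ((n : ℤ) + 1).toNat = n + 1 := by lia
    rw [Finset.prod_range_succ] at h1
    have h2 := left_ne_zero_of_mul h1
    have h3 := right_ne_zero_of_mul h1
    simp only [invQFactorial, add_sub_cancel_right, Int.toNat_natCast, e,
      show ¬ ((n : ℤ) < 0) by lia, show ¬ ((n : ℤ) + 1 < 0) by lia, if_false,
      Finset.prod_range_succ, show (y ^ ((n : ℤ) + 1)) = y * y ^ n by
        rw [zpow_add_one₀ hy0.ne', zpow_natCast, mul_comm]]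
    field_simp

/-- Coefficients of the finite form of the triple product. -/
noncomputable def tripleCoeff (x : ℝ) (n : ℕ) (k : ℤ) : ℝ :=
  x ^ (k ^ 2) * (∏ i ∈ Finset.range (2 * n), (1 - x ^ 2 * (x ^ 2) ^ i)) *
    (invQFactorial (x ^ 2) (n + k) * invQFactorial (x ^ 2) (n - k))

theorem tripleCoeff_succ {x : ℝ} (hx0 : 0 < x) (hx1 : x < 1) (n : ℕ) (k : ℤ) :
    tripleCoeff x (n + 1) k = (1 + (x ^ (2 * n + 1)) ^ 2) * tripleCoeff x n k +
      x ^ (2 * n + 1) * (tripleCoeff x n (k - 1) + tripleCoeff x n (k + 1)) := by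
  have hy0 : 0 < x ^ 2 := by positivity
  have hy1 : x ^ 2 < 1 := by nlinarith
  have r := invQFactorial_sub_one hy0 hy1
  have e1 : invQFactorial (x ^ 2) (n + k) =
      (1 - (x ^ 2) ^ (n + 1 + k : ℤ)) * invQFactorial (x ^ 2) (n + 1 + k) := by
    rw [← r]; congr 1; ring
  have e2 : invQFactorial (x ^ 2) (n - k) =
      (1 - (x ^ 2) ^ (n + 1 - k : ℤ)) * invQFactorial (x ^ 2) (n + 1 - k) := by
    rw [← r]; congr 1; ring
  have e3 : invQFactorial (x ^ 2) (n + (k - 1)) =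
      (1 - (x ^ 2) ^ (n + k : ℤ)) * invQFactorial (x ^ 2) (n + k) := by
    rw [← r]; congr 1; ring
  have e4 : invQFactorial (x ^ 2) (n - (k + 1)) =
      (1 - (x ^ 2) ^ (n - k : ℤ)) * invQFactorial (x ^ 2) (n - k) := by
    rw [← r]; congr 1; ring
  have e5 : invQFactorial (x ^ 2) (n - (k - 1)) = invQFactorial (x ^ 2) (n + 1 - k) := by
    congr 1; ring
  have e6 : invQFactorial (x ^ 2) (n + (k + 1)) = invQFactorial (x ^ 2) (n + 1 + k) := by
    congr 1; ring
  have hx := hx0.ne'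
  simp only [tripleCoeff, Nat.cast_add, Nat.cast_one, e3, e4, e5, e6, e1, e2,
    show 2 * (n + 1) = 2 * n + 1 + 1 by ring, Finset.prod_range_succ,
    show (k - 1) ^ 2 = k ^ 2 - k - k + 1 by ring, show (k + 1) ^ 2 = k ^ 2 + k + k + 1 by ring,
    zpow_add₀ hx, zpow_sub₀ hx, zpow_add₀ hy0.ne', zpow_sub₀ hy0.ne', zpow_one, zpow_natCast,
    show (x ^ 2) ^ k = (x ^ k) ^ 2 by rw [← zpow_natCast, ← zpow_mul, mul_comm, zpow_mul]; rfl]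
  have hA : x ^ k ≠ 0 := zpow_ne_zero _ hx
  generalize x ^ k = A at *
  generalize x ^ (k ^ 2) = B
  field_simp
  ring

theorem hasSum_tripleCoeff {x z : ℝ} (hx0 : 0 < x) (hx1 : x < 1) (hz : z ≠ 0) (n : ℕ) :
    HasSum (fun k : ℤ ↦ tripleCoeff x n k * z ^ k)
      ((∏ i ∈ Finset.range n, (1 - -z * x * (x ^ 2) ^ i)) *
        ∏ i ∈ Finset.range n, (1 - -z⁻¹ * x * (x ^ 2) ^ i)) := by
  induction n with
  | zero =>
    have h0 : ∀ k : ℤ, k ≠ 0 → tripleCoeff x 0 k * z ^ k = 0 := fun k hk ↦ by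
      rcases lt_or_gt_of_ne hk with h | h
      · simp [tripleCoeff, invQFactorial, h]
      · simp [tripleCoeff, invQFactorial, h]
    simpa [tripleCoeff, invQFactorial] using hasSum_single (0 : ℤ) h0
  | succ n ih =>
    have hdown := (((Equiv.subRight (1 : ℤ)).hasSum_iff).mpr ih).mul_left (x ^ (2 * n + 1) * z)
    have hup := (((Equiv.addRight (1 : ℤ)).hasSum_iff).mpr ih).mul_left (x ^ (2 * n + 1) * z⁻¹)
    convert! (ih.mul_left (1 + (x ^ (2 * n + 1)) ^ 2)).add (hdown.add hup) using 1
    · ext k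
      simp only [tripleCoeff_succ hx0 hx1, Function.comp_apply, Equiv.subRight_apply,
        Equiv.coe_addRight, zpow_sub_one₀ hz, zpow_add_one₀ hz]
      field_simp
    · rw [Finset.prod_range_succ, Finset.prod_range_succ]
      field_simp
      ring

theorem summable_zpow_sq_mul_zpow {x z : ℝ} (hx0 : 0 < x) (hx1 : x < 1) (hz : 0 < z) :
    Summable fun k : ℤ ↦ x ^ (k ^ 2) * z ^ k := by
  have hτ : 0 < (Complex.I * (-Real.log x / Real.pi : ℝ)).im := by
    simpa using div_pos (neg_pos.mpr (Real.log_neg hx0 hx1)) Real.pi_pos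
  have h := ((summable_jacobiTheta₂_term_iff (Complex.I * (-Real.log z / (2 * Real.pi) : ℝ)) _).mpr
    hτ).norm
  refine h.congr fun k ↦ ?_
  rw [norm_jacobiTheta₂_term, ← Real.rpow_intCast, ← Real.rpow_intCast,
    Real.rpow_def_of_pos hx0, Real.rpow_def_of_pos hz, ← Real.exp_add]
  congr 1
  have := Real.pi_ne_zero
  simp only [Complex.mul_im, Complex.I_re, Complex.I_im, Complex.ofReal_re, Complex.ofReal_im]
  push_cast
  field_simp
  ring

theorem tendsto_prod_one_sub {y : ℝ} (hy0 : 0 < y) (hy1 : y < 1) :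
    Tendsto (fun n ↦ ∏ i ∈ Finset.range n, (1 - y * y ^ i)) atTop (𝓝 (qPochR y y)) :=
  (multipliable_one_sub_mul_pow y hy0.le hy1).tendsto_prod_tprod_nat

theorem antitone_prod_one_sub {y : ℝ} (hy0 : 0 < y) (hy1 : y < 1) :
    Antitone fun n ↦ ∏ i ∈ Finset.range n, (1 - y * y ^ i) :=
  antitone_nat_of_succ_le fun n ↦ by
    rw [Finset.prod_range_succ]
    have := prod_one_sub_pos hy0 hy1 n
    have h2 : 0 < y * y ^ n := by positivity
    nlinarith

theorem invQFactorial_nonneg {y : ℝ} (hy0 : 0 < y) (hy1 : y < 1) (m : ℤ) :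
    0 ≤ invQFactorial y m := by
  unfold invQFactorial
  split_ifs
  · exact le_rfl
  · exact (inv_pos.mpr (prod_one_sub_pos hy0 hy1 _)).le

theorem invQFactorial_le {y : ℝ} (hy0 : 0 < y) (hy1 : y < 1) (m : ℤ) :
    invQFactorial y m ≤ (qPochR y y)⁻¹ := by
  have hP := qPochR_pos hy1 hy0.le hy1
  unfold invQFactorial
  split_ifs
  · positivity
  · exact inv_anti₀ hP ((antitone_prod_one_sub hy0 hy1).le_of_tendsto
      (tendsto_prod_one_sub hy0 hy1) _)

theorem tendsto_invQFactorial {y : ℝ} (hy0 : 0 < y) (hy1 : y < 1) :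
    Tendsto (invQFactorial y) atTop (𝓝 (qPochR y y)⁻¹) := by
  have hP := qPochR_pos hy1 hy0.le hy1
  have ht : Tendsto Int.toNat atTop atTop :=
    tendsto_atTop.mpr fun n ↦ (eventually_ge_atTop (n : ℤ)).mono fun m hm ↦ by lia
  refine (((tendsto_prod_one_sub hy0 hy1).comp ht).inv₀ hP.ne').congr' ?_
  filter_upwards [eventually_ge_atTop 0] with m hm
  simp [invQFactorial, hm.not_gt]

/-- The **Jacobi triple product** for real arguments. -/
theorem tsum_zpow_sq_mul_zpow {x z : ℝ} (hx0 : 0 < x) (hx1 : x < 1) (hz : z ≠ 0) :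
    ∑' k : ℤ, x ^ (k ^ 2) * z ^ k =
      qPochR (x ^ 2) (x ^ 2) * (qPochR (-z * x) (x ^ 2) * qPochR (-z⁻¹ * x) (x ^ 2)) := by
  have hy0 : 0 < x ^ 2 := by positivity
  have hy1 : x ^ 2 < 1 := by nlinarith
  have hP := qPochR_pos hy1 hy0.le hy1
  set P := qPochR (x ^ 2) (x ^ 2) with hPdef
  have hprod := ((multipliable_one_sub_mul_pow (-z * x) hy0.le hy1).tendsto_prod_tprod_nat).mul
    ((multipliable_one_sub_mul_pow (-z⁻¹ * x) hy0.le hy1).tendsto_prod_tprod_nat)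
  have hsum : Tendsto (fun n : ℕ ↦ ∑' k : ℤ, tripleCoeff x n k * z ^ k) atTop
      (𝓝 (∑' k : ℤ, x ^ (k ^ 2) * P * (P⁻¹ * P⁻¹) * z ^ k)) := by
    refine tendsto_tsum_of_dominated_convergence
      (bound := fun k : ℤ ↦ P⁻¹ * P⁻¹ * (x ^ (k ^ 2) * |z| ^ k))
      ((summable_zpow_sq_mul_zpow hx0 hx1 (abs_pos.mpr hz)).mul_left _) (fun k ↦ ?_)
      (.of_forall fun n k ↦ ?_)
    · refine Tendsto.mul_const _ (((tendsto_const_nhds.mul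
        ((tendsto_prod_one_sub hy0 hy1).comp ?_)).mul (.mul ?_ ?_)))
      · exact tendsto_id.const_mul_atTop' two_pos
      · exact (tendsto_invQFactorial hy0 hy1).comp
          (tendsto_atTop_add_const_right _ k tendsto_natCast_atTop_atTop)
      · exact (tendsto_invQFactorial hy0 hy1).comp
          (tendsto_atTop_add_const_right _ (-k) tendsto_natCast_atTop_atTop)
    · have hB : 0 < x ^ (k ^ 2) := zpow_pos hx0 _
      have hY0 := prod_one_sub_pos hy0 hy1 (2 * n)
      have hY1 := antitone_prod_one_sub hy0 hy1 (Nat.zero_le (2 * n))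
      have ha0 := invQFactorial_nonneg hy0 hy1 (n + k)
      have hb0 := invQFactorial_nonneg hy0 hy1 (n - k)
      have ha := invQFactorial_le hy0 hy1 (n + k)
      have hb := invQFactorial_le hy0 hy1 (n - k)
      simp only [Finset.range_zero, Finset.prod_empty] at hY1
      rw [tripleCoeff, norm_mul, norm_zpow, Real.norm_eq_abs, Real.norm_eq_abs,
        abs_of_nonneg (by positivity)]
      calc _ ≤ x ^ (k ^ 2) * 1 * (P⁻¹ * P⁻¹) * |z| ^ k := by gcongr
        _ = _ := by ring
  have hlim : _ = qPochR (-z * x) (x ^ 2) * qPochR (-z⁻¹ * x) (x ^ 2) :=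
    tendsto_nhds_unique hsum
      (hprod.congr fun n ↦ (hasSum_tripleCoeff hx0 hx1 hz n).tsum_eq.symm)
  rw [← hlim, ← tsum_mul_left]
  congr 1
  ext k
  field_simp

end TripleProduct

section Theta

/-- The theta series `∑ x ^ (k ^ 2)` over the integers, as a function of the real nome `x`. -/
noncomputable def thetaNome (x : ℝ) : ℝ := ∑' k : ℤ, x ^ (k ^ 2)

theorem neg_zpow_sq (x : ℝ) (k : ℤ) : (-x) ^ (k ^ 2) = x ^ (k ^ 2) * (-1) ^ k := by
  rcases Int.even_or_odd k with h | h
  · rw [h.neg_one_zpow, (h.pow_of_ne_zero two_ne_zero).neg_zpow, mul_one]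
  · rw [h.neg_one_zpow, h.pow.neg_zpow, mul_neg_one]

theorem summable_thetaNome {x : ℝ} (hx0 : 0 < x) (hx1 : x < 1) :
    Summable fun k : ℤ ↦ x ^ (k ^ 2) := by
  simpa using summable_zpow_sq_mul_zpow hx0 hx1 one_pos

theorem summable_thetaNome_neg {x : ℝ} (hx0 : 0 < x) (hx1 : x < 1) :
    Summable fun k : ℤ ↦ (-x) ^ (k ^ 2) := by
  refine .of_norm ((summable_thetaNome hx0 hx1).congr fun k ↦ ?_)
  rw [norm_zpow, norm_neg, Real.norm_of_nonneg hx0.le]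

theorem thetaNome_pos {x : ℝ} (hx0 : 0 < x) (hx1 : x < 1) : 0 < thetaNome x :=
  (summable_thetaNome hx0 hx1).tsum_pos (fun k ↦ (zpow_pos hx0 _).le) 0 (by simp)

theorem thetaNome_neg_eq_qPochR {x : ℝ} (hx0 : 0 < x) (hx1 : x < 1) :
    thetaNome (-x) * qPochR (x ^ 2) (x ^ 2) = qPochR x x ^ 2 := by
  have h := tsum_zpow_sq_mul_zpow hx0 hx1 (z := -1) (by norm_num)
  simp only [thetaNome, neg_zpow_sq]
  rw [h, qPochR_eq_mul_sq x hx0.le hx1, ← sq x]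
  norm_num
  ring

theorem thetaNome_neg_pos {x : ℝ} (hx0 : 0 < x) (hx1 : x < 1) : 0 < thetaNome (-x) := by
  have h := thetaNome_neg_eq_qPochR hx0 hx1
  have h2 : x ^ 2 < 1 := by nlinarith
  have hP := qPochR_pos h2 (sq_nonneg x) h2
  have hQ := qPochR_pos hx1 hx0.le hx1
  exact pos_of_mul_pos_left (h ▸ pow_pos hQ 2) hP.le

theorem thetaNome_sub_thetaNome_neg {x : ℝ} (hx0 : 0 < x) (hx1 : x < 1) :
    thetaNome x - thetaNome (-x) =
      2 * x * ∑' k : ℤ, (x ^ 4) ^ (k ^ 2) * (x ^ 4) ^ k := by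
  have ho : Function.Injective fun k : ℤ ↦ 2 * k + 1 := fun a b h ↦ by simpa using h
  rw [thetaNome, thetaNome, ← (summable_thetaNome hx0 hx1).tsum_sub
    (summable_thetaNome_neg hx0 hx1), ← ho.tsum_eq, ← tsum_mul_left]
  · congr 1
    ext k
    have h : x ^ ((2 * k + 1) ^ 2) = x * ((x ^ 4) ^ (k ^ 2) * (x ^ 4) ^ k) := by
      simp only [← zpow_natCast x 4, ← zpow_mul, ← zpow_add₀ hx0.ne', ← zpow_one_add₀ hx0.ne']
      congr 1
      push_cast
      ring
    rw [neg_zpow_sq, (odd_two_mul_add_one k).neg_one_zpow, h]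
    ring
  · intro k hk
    rcases Int.even_or_odd' k with ⟨m, rfl | rfl⟩
    · rw [Function.mem_support, neg_zpow_sq, (even_two_mul m).neg_one_zpow] at hk
      simp at hk
    · exact ⟨m, rfl⟩

theorem thetaNome_add_thetaNome_neg {x : ℝ} (hx0 : 0 < x) (hx1 : x < 1) :
    thetaNome x + thetaNome (-x) = 2 * thetaNome (x ^ 4) := by
  have he : Function.Injective fun k : ℤ ↦ 2 * k := fun a b h ↦ by simpa using h
  rw [thetaNome, thetaNome, ← (summable_thetaNome hx0 hx1).tsum_add
    (summable_thetaNome_neg hx0 hx1), ← he.tsum_eq, thetaNome, ← tsum_mul_left]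
  · congr 1
    ext k
    rw [neg_zpow_sq, (even_two_mul k).neg_one_zpow, mul_pow, zpow_mul]
    norm_num
    ring
  · intro k hk
    rcases Int.even_or_odd' k with ⟨m, rfl | rfl⟩
    · exact ⟨m, rfl⟩
    · rw [Function.mem_support, neg_zpow_sq, (odd_two_mul_add_one m).neg_one_zpow] at hk
      simp at hk

/-- A sum over pairs of integers of equal parity, in rotated coordinates. -/
theorem tsum_eq_tsum_add_sub {f : ℤ × ℤ → ℝ} (hf : ∀ m n, Odd (m + n) → f (m, n) = 0) :
    ∑' p, f p = ∑' p : ℤ × ℤ, f (p.1 + p.2, p.1 - p.2) := by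
  have hinj : Function.Injective fun p : ℤ × ℤ ↦ (p.1 + p.2, p.1 - p.2) := by
    rintro ⟨a, b⟩ ⟨c, d⟩ h
    simp only [Prod.mk.injEq] at h ⊢
    lia
  refine (hinj.tsum_eq ?_).symm
  rintro ⟨m, n⟩ hmn
  rcases Int.even_or_odd (m + n) with ⟨r, hr⟩ | h
  · exact ⟨(r, m - r), by simp only [Prod.mk.injEq]; lia⟩
  · exact absurd (hf m n h) hmn

theorem summable_norm_thetaNome {x : ℝ} (hx0 : 0 < x) (hx1 : x < 1) :
    Summable fun k : ℤ ↦ ‖x ^ (k ^ 2)‖ := (summable_thetaNome hx0 hx1).norm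

theorem summable_norm_thetaNome_neg {x : ℝ} (hx0 : 0 < x) (hx1 : x < 1) :
    Summable fun k : ℤ ↦ ‖(-x) ^ (k ^ 2)‖ := (summable_thetaNome_neg hx0 hx1).norm

theorem neg_one_zpow_add_of_odd {m n : ℤ} (h : Odd (m + n)) :
    (-1 : ℝ) ^ m = -(-1) ^ n := by
  have h1 := h.neg_one_zpow (α := ℝ)
  rw [zpow_add₀ (by norm_num)] at h1
  rcases Int.even_or_odd n with hn | hn <;> rw [hn.neg_one_zpow] at h1 ⊢ <;> linarith

theorem thetaNome_sq_add_sq {x : ℝ} (hx0 : 0 < x) (hx1 : x < 1) :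
    thetaNome x ^ 2 + thetaNome (-x) ^ 2 = 2 * thetaNome (x ^ 2) ^ 2 := by
  have hx2 : x ^ 2 < 1 := by nlinarith
  have hp := summable_norm_thetaNome hx0 hx1
  have hn := summable_norm_thetaNome_neg hx0 hx1
  have h2 := summable_norm_thetaNome (pow_pos hx0 2) hx2
  simp only [thetaNome, sq (tsum _)]
  rw [tsum_mul_tsum_of_summable_norm hp hp, tsum_mul_tsum_of_summable_norm hn hn,
    tsum_mul_tsum_of_summable_norm h2 h2,
    ← (summable_mul_of_summable_norm hp hp).tsum_add (summable_mul_of_summable_norm hn hn),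
    tsum_eq_tsum_add_sub, ← tsum_mul_left]
  · congr 1
    ext ⟨u, v⟩
    have he : (-1 : ℝ) ^ (u + v) * (-1) ^ (u - v) = 1 := by
      rw [← zpow_add₀ (by norm_num), Even.neg_one_zpow ⟨u, by ring⟩]
    simp only [neg_zpow_sq, mul_mul_mul_comm, he, ← zpow_natCast x 2, ← zpow_mul,
      ← zpow_add₀ hx0.ne', mul_one, ← two_mul]
    congr 2
    push_cast
    ring
  · intro m n h
    simp only [neg_zpow_sq, neg_one_zpow_add_of_odd h]
    rcases Int.even_or_odd n with hn | hn <;> rw [hn.neg_one_zpow] <;> ring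

theorem thetaNome_mul_thetaNome_neg {x : ℝ} (hx0 : 0 < x) (hx1 : x < 1) :
    thetaNome x * thetaNome (-x) = thetaNome (-x ^ 2) ^ 2 := by
  have hx2 : x ^ 2 < 1 := by nlinarith
  have hp := summable_norm_thetaNome hx0 hx1
  have hn := summable_norm_thetaNome_neg hx0 hx1
  have h2 := summable_norm_thetaNome_neg (pow_pos hx0 2) hx2
  suffices h : thetaNome x * thetaNome (-x) + thetaNome (-x) * thetaNome x =
      2 * thetaNome (-x ^ 2) ^ 2 by linarith
  simp only [thetaNome, sq (tsum _)]
  rw [tsum_mul_tsum_of_summable_norm hp hn, tsum_mul_tsum_of_summable_norm hn hp,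
    tsum_mul_tsum_of_summable_norm h2 h2,
    ← (summable_mul_of_summable_norm hp hn).tsum_add (summable_mul_of_summable_norm hn hp),
    tsum_eq_tsum_add_sub, ← tsum_mul_left]
  · congr 1
    ext ⟨u, v⟩
    have he : (-1 : ℝ) ^ (u - v) = (-1) ^ (u + v) := by
      rw [show u + v = u - v + 2 * v by ring, zpow_add₀ (by norm_num),
        (even_two_mul v).neg_one_zpow, mul_one]
    have hs : x ^ ((u + v) ^ 2) * x ^ ((u - v) ^ 2) = (x ^ 2) ^ (u ^ 2) * (x ^ 2) ^ (v ^ 2) := by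
      simp only [← zpow_natCast x 2, ← zpow_mul, ← zpow_add₀ hx0.ne']
      congr 1
      push_cast
      ring
    simp only [neg_zpow_sq, he]
    rw [mul_mul_mul_comm ((x ^ 2) ^ u ^ 2), ← hs, zpow_add₀ (by norm_num : (-1 : ℝ) ≠ 0)]
    ring
  · intro m n h
    simp only [neg_zpow_sq, neg_one_zpow_add_of_odd h]
    ring

theorem tendsto_thetaNome_zero : Tendsto thetaNome (𝓝 0) (𝓝 1) := by
  have h : Tendsto (fun x : ℝ ↦ ∑' k : ℤ, x ^ (k ^ 2)) (𝓝 0) (𝓝 (∑' k : ℤ, (0 : ℝ) ^ (k ^ 2))) := by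
    refine tendsto_tsum_of_dominated_convergence (bound := fun k : ℤ ↦ (1 / 2 : ℝ) ^ (k ^ 2))
      (summable_thetaNome (by norm_num) (by norm_num)) (fun k ↦ ?_) ?_
    · exact (continuousAt_zpow₀ _ _ (Or.inr (sq_nonneg k)))
    · filter_upwards [Metric.ball_mem_nhds (0 : ℝ) (by norm_num : (0 : ℝ) < 1 / 2)] with x hx k
      rw [norm_zpow]
      have hx' : ‖x‖ ≤ 1 / 2 := (by simpa using hx : |x| < 1 / 2).le
      obtain ⟨n, hn⟩ := Int.eq_ofNat_of_zero_le (sq_nonneg k)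
      rw [hn]
      simpa only [Int.ofNat_eq_natCast, zpow_natCast] using pow_le_pow_left₀ (norm_nonneg x) hx' n
  rwa [tsum_eq_single 0 fun k hk ↦ zero_zpow _ (pow_ne_zero 2 hk), zero_pow two_ne_zero,
    zpow_zero] at h

theorem thetaNome_exp_neg_pi_mul (t : ℝ) :
    thetaNome (Real.exp (-Real.pi * t)) = ∑' k : ℤ, Real.exp (-Real.pi * t * (k : ℝ) ^ 2) := by
  refine tsum_congr fun k ↦ ?_
  rw [← Real.rpow_intCast, ← Real.exp_mul]
  push_cast
  rfl

theorem thetaNome_exp_neg_pi_div {t : ℝ} (ht : 0 < t) :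
    thetaNome (Real.exp (-Real.pi * t)) =
      (√t)⁻¹ * thetaNome (Real.exp (-Real.pi * t⁻¹)) := by
  rw [thetaNome_exp_neg_pi_mul, thetaNome_exp_neg_pi_mul, Real.tsum_exp_neg_mul_int_sq ht,
    Real.sqrt_eq_rpow, one_div (t ^ _), div_eq_mul_inv (-Real.pi)]

end Theta

section AGMIntegral

/-- The complete elliptic integral attached to the arithmetic-geometric mean of `a` and `b`. -/
noncomputable def agmIntegral (a b : ℝ) : ℝ :=
  ∫ t : ℝ, (√((t ^ 2 + a ^ 2) * (t ^ 2 + b ^ 2)))⁻¹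

theorem agmIntegral_comm (a b : ℝ) : agmIntegral a b = agmIntegral b a := by
  simp only [agmIntegral, mul_comm]

theorem agmIntegral_eq_two_mul (a b : ℝ) :
    agmIntegral a b = 2 * ∫ t in Ioi (0 : ℝ), (√((t ^ 2 + a ^ 2) * (t ^ 2 + b ^ 2)))⁻¹ := by
  rw [← integral_comp_abs (f := fun t : ℝ ↦ (√((t ^ 2 + a ^ 2) * (t ^ 2 + b ^ 2)))⁻¹), agmIntegral]
  simp only [sq_abs]

theorem agmIntegral_const_mul {c : ℝ} (hc : 0 < c) (a b : ℝ) :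
    agmIntegral (c * a) (c * b) = c⁻¹ * agmIntegral a b := by
  have h := Measure.integral_comp_mul_left
    (fun t : ℝ ↦ (√((t ^ 2 + (c * a) ^ 2) * (t ^ 2 + (c * b) ^ 2)))⁻¹) c
  have h2 : ∀ t : ℝ, (√(((c * t) ^ 2 + (c * a) ^ 2) * ((c * t) ^ 2 + (c * b) ^ 2)))⁻¹ =
      (c ^ 2)⁻¹ * (√((t ^ 2 + a ^ 2) * (t ^ 2 + b ^ 2)))⁻¹ := fun t ↦ by
    rw [show ((c * t) ^ 2 + (c * a) ^ 2) * ((c * t) ^ 2 + (c * b) ^ 2) =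
      (c ^ 2) ^ 2 * ((t ^ 2 + a ^ 2) * (t ^ 2 + b ^ 2)) by ring, Real.sqrt_mul (by positivity),
      Real.sqrt_sq (by positivity), mul_inv]
  simp only [h2, integral_const_mul, smul_eq_mul, abs_of_pos (inv_pos.mpr hc)] at h
  simp only [agmIntegral]
  field_simp at h ⊢
  linarith

theorem integrable_and_integral_inv_sq_add_sq {c : ℝ} (hc : 0 < c) :
    Integrable (fun t : ℝ ↦ (t ^ 2 + c ^ 2)⁻¹) ∧ ∫ t : ℝ, (t ^ 2 + c ^ 2)⁻¹ = Real.pi / c := by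
  have e : (fun t : ℝ ↦ (t ^ 2 + c ^ 2)⁻¹) = fun t ↦ (c ^ 2)⁻¹ * (1 + (c⁻¹ * t) ^ 2)⁻¹ := by
    ext t
    field_simp
    ring
  rw [e]
  refine ⟨(integrable_inv_one_add_sq.comp_mul_left' (inv_ne_zero hc.ne')).const_mul _, ?_⟩
  rw [integral_const_mul, Measure.integral_comp_mul_left (fun t : ℝ ↦ (1 + t ^ 2)⁻¹),
    integral_univ_inv_one_add_sq, inv_inv, abs_of_pos hc, smul_eq_mul]
  field_simp

theorem inv_sqrt_le_inv {m a b : ℝ} (hm : 0 < m) (ha : m ≤ a) (hb : m ≤ b) (t : ℝ) :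
    (√((t ^ 2 + a ^ 2) * (t ^ 2 + b ^ 2)))⁻¹ ≤ (t ^ 2 + m ^ 2)⁻¹ := by
  refine inv_anti₀ (by positivity) (Real.le_sqrt_of_sq_le ?_)
  rw [sq (_ + _)]
  gcongr

theorem inv_le_inv_sqrt {M a b : ℝ} (ha0 : 0 < a) (hb0 : 0 < b) (ha : a ≤ M) (hb : b ≤ M) (t : ℝ) :
    (t ^ 2 + M ^ 2)⁻¹ ≤ (√((t ^ 2 + a ^ 2) * (t ^ 2 + b ^ 2)))⁻¹ := by
  refine inv_anti₀ (by positivity) (Real.sqrt_le_iff.mpr ⟨by positivity, ?_⟩)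
  rw [sq (_ + _)]
  gcongr

theorem integrable_agmIntegral {a b : ℝ} (ha : 0 < a) (hb : 0 < b) :
    Integrable fun t : ℝ ↦ (√((t ^ 2 + a ^ 2) * (t ^ 2 + b ^ 2)))⁻¹ := by
  have hm : 0 < min a b := lt_min ha hb
  refine (integrable_and_integral_inv_sq_add_sq hm).1.mono' (by fun_prop) (.of_forall fun t ↦ ?_)
  rw [Real.norm_of_nonneg (by positivity)]
  exact inv_sqrt_le_inv hm (min_le_left _ _) (min_le_right _ _) t

theorem agmIntegral_le {a b : ℝ} (ha : 0 < a) (hb : 0 < b) :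
    agmIntegral a b ≤ Real.pi / min a b := by
  have hm : 0 < min a b := lt_min ha hb
  rw [← (integrable_and_integral_inv_sq_add_sq hm).2]
  exact integral_mono (integrable_agmIntegral ha hb) (integrable_and_integral_inv_sq_add_sq hm).1
    (inv_sqrt_le_inv hm (min_le_left _ _) (min_le_right _ _))

theorem le_agmIntegral {a b : ℝ} (ha : 0 < a) (hb : 0 < b) :
    Real.pi / max a b ≤ agmIntegral a b := by
  have hM : 0 < max a b := lt_max_of_lt_left ha
  rw [← (integrable_and_integral_inv_sq_add_sq hM).2]
  exact integral_mono (integrable_and_integral_inv_sq_add_sq hM).1 (integrable_agmIntegral ha hb)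
    (inv_le_inv_sqrt ha hb (le_max_left _ _) (le_max_right _ _))

/-- Gauss's transformation: the elliptic integral is invariant under an arithmetic-geometric
mean step. -/
theorem agmIntegral_mean {a b g : ℝ} (ha : 0 < a) (hb : 0 < b) (hg : g ^ 2 = a * b) :
    agmIntegral ((a + b) / 2) g = agmIntegral a b := by
  have hab : 0 < a * b := mul_pos ha hb
  have himage : (fun t : ℝ ↦ (t - a * b / t) / 2) '' Ioi 0 = univ := by
    refine eq_univ_of_forall fun u ↦ ?_
    have hs : 0 ≤ u ^ 2 + a * b := by positivity
    have hpos : 0 < u + √(u ^ 2 + a * b) := by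
      have : |u| < √(u ^ 2 + a * b) := Real.lt_sqrt_of_sq_lt (by rw [sq_abs]; linarith)
      linarith [neg_abs_le u]
    refine ⟨u + √(u ^ 2 + a * b), hpos, ?_⟩
    have := Real.sq_sqrt hs
    have h0 := hpos.ne'
    field_simp
    nlinarith
  have hinj : InjOn (fun t : ℝ ↦ (t - a * b / t) / 2) (Ioi 0) := by
    refine StrictMonoOn.injOn fun s hs t ht hst ↦ ?_
    have : a * b / t < a * b / s := div_lt_div_of_pos_left hab hs hst
    linarith
  have hderiv : ∀ t ∈ Ioi (0 : ℝ), HasDerivWithinAt (fun t : ℝ ↦ (t - a * b / t) / 2)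
      ((t ^ 2 + a * b) / (2 * t ^ 2)) (Ioi 0) t := fun t ht ↦ by
    have ht0 : t ≠ 0 := ne_of_gt ht
    have h := (((hasDerivAt_id t).sub ((hasDerivAt_inv ht0).const_mul (a * b))).div_const 2)
    refine (h.congr_deriv ?_).hasDerivWithinAt
    field_simp
    ring
  rw [agmIntegral_eq_two_mul a b, agmIntegral, ← setIntegral_univ, ← himage,
    integral_image_eq_integral_abs_deriv_smul measurableSet_Ioi hderiv hinj, ← integral_const_mul]
  refine setIntegral_congr_fun measurableSet_Ioi fun t (ht : 0 < t) ↦ ?_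
  have e : (((t - a * b / t) / 2) ^ 2 + ((a + b) / 2) ^ 2) * (((t - a * b / t) / 2) ^ 2 + g ^ 2) =
      ((t ^ 2 + a * b) / (4 * t ^ 2)) ^ 2 * ((t ^ 2 + a ^ 2) * (t ^ 2 + b ^ 2)) := by
    rw [hg]
    field_simp
    ring
  simp only [smul_eq_mul]
  rw [e, Real.sqrt_mul (by positivity), Real.sqrt_sq (by positivity), abs_of_pos (by positivity)]
  field_simp
  norm_num

theorem agmIntegral_thetaNome {x : ℝ} (hx0 : 0 < x) (hx1 : x < 1) :
    agmIntegral (thetaNome x ^ 2) (thetaNome (-x) ^ 2) = Real.pi := by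
  have hpow : ∀ n : ℕ, 0 < x ^ 2 ^ n ∧ x ^ 2 ^ n < 1 := fun n ↦
    ⟨by positivity, pow_lt_one₀ hx0.le hx1 (by positivity)⟩
  have hstep : ∀ n : ℕ, agmIntegral (thetaNome (x ^ 2 ^ n) ^ 2) (thetaNome (-x ^ 2 ^ n) ^ 2) =
      agmIntegral (thetaNome x ^ 2) (thetaNome (-x) ^ 2) := by
    intro n
    induction n with
    | zero => simp
    | succ n ih =>
      obtain ⟨h0, h1⟩ := hpow n
      have hp := thetaNome_pos h0 h1
      have hn := thetaNome_neg_pos h0 h1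
      rw [← ih, ← agmIntegral_mean (pow_pos hp 2) (pow_pos hn 2)
        (g := thetaNome (-x ^ 2 ^ (n + 1)) ^ 2), thetaNome_sq_add_sq h0 h1, pow_succ 2, pow_mul]
      · congr 1
        ring
      · rw [pow_succ 2, pow_mul, ← thetaNome_mul_thetaNome_neg h0 h1]
        ring
  have hx : Tendsto (fun n : ℕ ↦ x ^ 2 ^ n) atTop (𝓝 0) :=
    (tendsto_pow_atTop_nhds_zero_of_lt_one hx0.le hx1).comp
      (tendsto_pow_atTop_atTop_of_one_lt one_lt_two)
  have h1 : Tendsto (fun n : ℕ ↦ thetaNome (x ^ 2 ^ n) ^ 2) atTop (𝓝 1) := by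
    simpa using (tendsto_thetaNome_zero.comp hx).pow 2
  have h2 : Tendsto (fun n : ℕ ↦ thetaNome (-x ^ 2 ^ n) ^ 2) atTop (𝓝 1) := by
    have hx' : Tendsto (fun n : ℕ ↦ -x ^ 2 ^ n) atTop (𝓝 0) := by simpa using hx.neg
    simpa using (tendsto_thetaNome_zero.comp hx').pow 2
  have hpos : ∀ n : ℕ, 0 < thetaNome (x ^ 2 ^ n) ^ 2 ∧ 0 < thetaNome (-x ^ 2 ^ n) ^ 2 := fun n ↦
    ⟨pow_pos (thetaNome_pos (hpow n).1 (hpow n).2) 2,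
      pow_pos (thetaNome_neg_pos (hpow n).1 (hpow n).2) 2⟩
  have hmax := (tendsto_const_nhds (x := Real.pi)).div (h1.max h2) (by norm_num)
  have hmin := (tendsto_const_nhds (x := Real.pi)).div (h1.min h2) (by norm_num)
  rw [max_self, div_one] at hmax
  rw [min_self, div_one] at hmin
  refine le_antisymm (ge_of_tendsto' hmin fun n ↦ ?_) (le_of_tendsto' hmax fun n ↦ ?_)
  · rw [← hstep n]
    exact agmIntegral_le (hpos n).1 (hpos n).2
  · rw [← hstep n]
    exact le_agmIntegral (hpos n).1 (hpos n).2

theorem agmIntegral_one_sqrt_two :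
    agmIntegral 1 (√2) = ProbabilityTheory.beta (1 / 4) (1 / 2) / 2 := by
  have himage : (fun t : ℝ ↦ ((1 + t ^ 2) ^ 2)⁻¹) '' Ioi 0 = Ioo 0 1 := by
    ext u
    constructor
    · rintro ⟨t, ht : 0 < t, rfl⟩
      exact ⟨by positivity, inv_lt_one_of_one_lt₀ (by nlinarith [sq_pos_of_pos ht])⟩
    · rintro ⟨hu0, hu1⟩
      have hs0 : 0 < √u := Real.sqrt_pos.mpr hu0
      have hs1 : 1 < (√u)⁻¹ :=
        (one_lt_inv₀ hs0).mpr (by rw [Real.sqrt_lt' one_pos]; simpa using hu1)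
      refine ⟨√((√u)⁻¹ - 1), Real.sqrt_pos.mpr (by linarith), ?_⟩
      simp only
      rw [Real.sq_sqrt (by linarith), add_sub_cancel, inv_pow, Real.sq_sqrt hu0.le, inv_inv]
  have hinj : InjOn (fun t : ℝ ↦ ((1 + t ^ 2) ^ 2)⁻¹) (Ioi 0) := by
    refine StrictAntiOn.injOn fun s (hs : 0 < s) t (ht : 0 < t) hst ↦ ?_
    gcongr
  have hderiv : ∀ t ∈ Ioi (0 : ℝ), HasDerivWithinAt (fun t : ℝ ↦ ((1 + t ^ 2) ^ 2)⁻¹)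
      (-(4 * t) / (1 + t ^ 2) ^ 3) (Ioi 0) t := fun t ht ↦ by
    have h := ((((hasDerivAt_id t).pow 2).const_add 1).pow 2).inv
      (by simp only [id, Pi.pow_apply]; positivity)
    refine (h.congr_deriv ?_).hasDerivWithinAt
    simp only [id, Pi.pow_apply]
    field_simp
    ring
  have hbeta : ProbabilityTheory.beta (1 / 4) (1 / 2) =
      ∫ u in Ioo (0 : ℝ) 1, u ^ (-(3 / 4) : ℝ) * (1 - u) ^ (-(1 / 2) : ℝ) := by
    rw [ProbabilityTheory.beta_eq_betaIntegralReal _ _ (by norm_num) (by norm_num),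
      Complex.betaIntegral, intervalIntegral.integral_of_le zero_le_one,
      ← integral_Ioc_eq_integral_Ioo]
    rw [← Complex.ofReal_re (∫ u in Ioc (0 : ℝ) 1, _), ← integral_complex_ofReal]
    congr 1
    refine setIntegral_congr_fun measurableSet_Ioc fun u hu ↦ ?_
    push_cast
    rw [Complex.ofReal_cpow hu.1.le, Complex.ofReal_cpow (by linarith [hu.2])]
    norm_num
  rw [agmIntegral_eq_two_mul, hbeta, ← himage,
    integral_image_eq_integral_abs_deriv_smul measurableSet_Ioi hderiv hinj]
  have h_int : ∫ t in Ioi (0 : ℝ), |-(4 * t) / (1 + t ^ 2) ^ 3| •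
      ((((1 + t ^ 2) ^ 2)⁻¹) ^ (-(3 / 4) : ℝ) * (1 - ((1 + t ^ 2) ^ 2)⁻¹) ^ (-(1 / 2) : ℝ)) =
      4 * ∫ t in Ioi (0 : ℝ), (√((t ^ 2 + 1 ^ 2) * (t ^ 2 + √2 ^ 2)))⁻¹ := by
    rw [← integral_const_mul]
    refine setIntegral_congr_fun measurableSet_Ioi fun t (ht : 0 < t) ↦ ?_
    have hs : 0 < 1 + t ^ 2 := by positivity
    have e1 : (((1 + t ^ 2) ^ 2)⁻¹) ^ (-(3 / 4) : ℝ) = (1 + t ^ 2) * √(1 + t ^ 2) := by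
      rw [Real.inv_rpow (by positivity), Real.rpow_neg (by positivity), inv_inv,
        ← Real.rpow_natCast, ← Real.rpow_mul hs.le, Real.sqrt_eq_rpow,
        ← Real.rpow_one_add' hs.le (by norm_num)]
      norm_num
    have e2 : (1 - ((1 + t ^ 2) ^ 2)⁻¹) ^ (-(1 / 2) : ℝ) =
        (1 + t ^ 2) / (t * √(t ^ 2 + 2)) := by
      rw [show 1 - ((1 + t ^ 2) ^ 2)⁻¹ = (t / (1 + t ^ 2)) ^ 2 * (t ^ 2 + 2) by field_simp; ring,
        Real.rpow_neg (by positivity), ← Real.sqrt_eq_rpow, Real.sqrt_mul (by positivity),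
        Real.sqrt_sq (by positivity)]
      field_simp
    simp only [smul_eq_mul, e1, e2]
    rw [neg_div, abs_neg, abs_of_pos (by positivity), Real.sq_sqrt zero_le_two, one_pow,
      Real.sqrt_mul (by positivity), add_comm (t ^ 2) 1]
    field_simp
    rw [Real.sq_sqrt hs.le]
  rw [h_int]
  ring

/-- The lemniscatic value of the elliptic integral. -/
theorem agmIntegral_one_sqrt_two_eq_Gamma :
    agmIntegral 1 (√2) = Real.pi * √Real.pi / (√2 * Real.Gamma (3 / 4) ^ 2) := by
  have hG : 0 < Real.Gamma (3 / 4) := Real.Gamma_pos_of_pos (by norm_num)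
  have hrefl := Real.Gamma_mul_Gamma_one_sub (1 / 4)
  rw [show (1 : ℝ) - 1 / 4 = 3 / 4 by norm_num, show Real.pi * (1 / 4) = Real.pi / 4 by ring,
    Real.sin_pi_div_four] at hrefl
  rw [agmIntegral_one_sqrt_two, ProbabilityTheory.beta,
    show (1 : ℝ) / 4 + 1 / 2 = 3 / 4 by norm_num, Real.Gamma_one_half_eq, eq_div_of_mul_eq hG.ne' hrefl]
  field_simp

end AGMIntegral

/-! ### Special values at the nome `exp (-π)` -/

theorem thetaNome_exp_neg_pi_div_two :
    thetaNome (Real.exp (-Real.pi / 2)) = √2 * thetaNome (Real.exp (-Real.pi) ^ 2) := by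
  have h := thetaNome_exp_neg_pi_div (t := 1 / 2) (by norm_num)
  rw [← Real.exp_nat_mul]
  convert h using 2
  · ring_nf
  · rw [← Real.sqrt_inv]; norm_num
  · push_cast; ring_nf

theorem thetaNome_exp_neg_pi_div_four :
    thetaNome (Real.exp (-Real.pi / 4)) = 2 * thetaNome (Real.exp (-Real.pi) ^ 4) := by
  have h := thetaNome_exp_neg_pi_div (t := 1 / 4) (by norm_num)
  rw [← Real.exp_nat_mul]
  convert h using 2
  · ring_nf
  · rw [← Real.sqrt_inv, show ((1 : ℝ) / 4)⁻¹ = 2 ^ 2 by norm_num, Real.sqrt_sq (by norm_num)]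
  · push_cast; ring_nf

theorem exp_neg_pi_lt_one : Real.exp (-Real.pi) < 1 :=
  Real.exp_lt_one_iff.2 (neg_neg_of_pos Real.pi_pos)

theorem exp_neg_pi_div_two_lt_one : Real.exp (-Real.pi / 2) < 1 :=
  Real.exp_lt_one_iff.2 (by linarith [Real.pi_pos])

theorem exp_neg_pi_div_two_sq : Real.exp (-Real.pi / 2) ^ 2 = Real.exp (-Real.pi) := by
  rw [← Real.exp_nat_mul]; push_cast; ring_nf

theorem thetaNome_neg_exp_neg_pi_div_two_sq :
    thetaNome (-Real.exp (-Real.pi / 2)) ^ 2 =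
      thetaNome (Real.exp (-Real.pi)) ^ 2 - thetaNome (-Real.exp (-Real.pi)) ^ 2 := by
  have h₁ := thetaNome_sq_add_sq (Real.exp_pos (-Real.pi)) exp_neg_pi_lt_one
  have h₂ := thetaNome_sq_add_sq (Real.exp_pos (-Real.pi / 2)) exp_neg_pi_div_two_lt_one
  rw [exp_neg_pi_div_two_sq, thetaNome_exp_neg_pi_div_two, mul_pow,
    Real.sq_sqrt zero_le_two] at h₂
  linarith

theorem thetaNome_exp_neg_pi_sq_eq_sqrt_two_mul :
    thetaNome (Real.exp (-Real.pi)) ^ 2 = √2 * thetaNome (-Real.exp (-Real.pi)) ^ 2 := by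
  have h₁ := thetaNome_sq_add_sq (Real.exp_pos (-Real.pi / 2)) exp_neg_pi_div_two_lt_one
  have h₂ := thetaNome_mul_thetaNome_neg (Real.exp_pos (-Real.pi / 2)) exp_neg_pi_div_two_lt_one
  have h₃ := thetaNome_neg_exp_neg_pi_div_two_sq
  rw [exp_neg_pi_div_two_sq] at h₁ h₂
  refine (pow_left_inj₀ (by positivity) (by positivity) two_ne_zero).1 ?_
  rw [mul_pow √2, Real.sq_sqrt zero_le_two]
  have h₄ := congrArg (· ^ 2) h₂
  simp only [mul_pow] at h₄
  rw [h₃, show thetaNome (Real.exp (-Real.pi / 2)) ^ 2 = thetaNome (Real.exp (-Real.pi)) ^ 2 +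
    thetaNome (-Real.exp (-Real.pi)) ^ 2 by linarith] at h₄
  linarith

theorem thetaNome_neg_exp_neg_pi_sq :
    thetaNome (-Real.exp (-Real.pi)) ^ 2 = √Real.pi / (√2 * Real.Gamma (3 / 4) ^ 2) := by
  have hT : 0 < thetaNome (-Real.exp (-Real.pi)) ^ 2 :=
    pow_pos (thetaNome_neg_pos (Real.exp_pos _) exp_neg_pi_lt_one) 2
  have h := agmIntegral_thetaNome (Real.exp_pos (-Real.pi)) exp_neg_pi_lt_one
  rw [thetaNome_exp_neg_pi_sq_eq_sqrt_two_mul, agmIntegral_comm] at h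
  have h' := agmIntegral_const_mul hT 1 √2
  rw [mul_one, mul_comm _ √2, h, agmIntegral_one_sqrt_two_eq_Gamma] at h'
  have hG : 0 < Real.Gamma (3 / 4) := Real.Gamma_pos_of_pos (by norm_num)
  have hpi := Real.pi_pos
  rw [eq_inv_mul_iff_mul_eq₀ hT.ne'] at h'
  field_simp at h' ⊢
  linarith

theorem thetaNome_exp_neg_pi :
    thetaNome (Real.exp (-Real.pi)) = Real.pi ^ ((1 : ℝ) / 4) / Real.Gamma (3 / 4) := by
  have hG : 0 < Real.Gamma (3 / 4) := Real.Gamma_pos_of_pos (by norm_num)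
  have hpi := Real.pi_pos
  refine (pow_left_inj₀ (thetaNome_pos (Real.exp_pos _) exp_neg_pi_lt_one).le (by positivity)
    two_ne_zero).1 ?_
  rw [thetaNome_exp_neg_pi_sq_eq_sqrt_two_mul, thetaNome_neg_exp_neg_pi_sq, div_pow,
    ← Real.rpow_mul_natCast hpi.le, Real.sqrt_eq_rpow Real.pi]
  norm_num
  field_simp

/-- The value of `(q; q)_∞` at `q = exp (-2π)`, in terms of theta values at `exp (-π)`. -/
theorem two_mul_exp_mul_qPochR_pow_three :
    2 * Real.exp (-Real.pi / 4) * qPochR (Real.exp (-Real.pi) ^ 2) (Real.exp (-Real.pi) ^ 2) ^ 3 =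
      thetaNome (Real.exp (-Real.pi)) * thetaNome (-Real.exp (-Real.pi)) ^ 2 := by
  have hy0 := Real.exp_pos (-Real.pi / 4)
  have hy1 : Real.exp (-Real.pi / 4) < 1 := Real.exp_lt_one_iff.2 (by linarith [Real.pi_pos])
  have hyx : Real.exp (-Real.pi / 4) ^ 4 = Real.exp (-Real.pi) := by
    rw [← Real.exp_nat_mul]; push_cast; ring_nf
  have hx0 := Real.exp_pos (-Real.pi)
  have hx1 := exp_neg_pi_lt_one
  have hsub := thetaNome_sub_thetaNome_neg hy0 hy1
  have hadd := thetaNome_add_thetaNome_neg hy0 hy1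
  have hadd' := thetaNome_add_thetaNome_neg hx0 hx1
  rw [hyx] at hsub hadd
  rw [thetaNome_exp_neg_pi_div_four] at hsub hadd
  rw [tsum_zpow_sq_mul_zpow hx0 hx1 hx0.ne'] at hsub
  set x := Real.exp (-Real.pi)
  set y := Real.exp (-Real.pi / 4)
  have hq0 : 0 < x ^ 2 := by positivity
  have hq1 : x ^ 2 < 1 := pow_lt_one₀ hx0.le hx1 two_ne_zero
  have e₁ : -x * x = -x ^ 2 := by ring
  have e₂ : -x⁻¹ * x = -1 := by field_simp
  have hm1 := qPochR_eq_one_sub_mul (-1) hq0.le hq1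
  rw [neg_one_mul] at hm1
  have hneg := qPochR_neg_mul_qPochR (x ^ 2) hq0.le hq1
  rw [e₁, e₂, hm1] at hsub
  have ht := thetaNome_neg_eq_qPochR hq0 hq1
  have hmul := thetaNome_mul_thetaNome_neg hx0 hx1
  have hP := qPochR_pos hq1 hq0.le hq1
  rw [← hneg] at ht
  set P := qPochR (x ^ 2) (x ^ 2)
  set R := qPochR (-x ^ 2) (x ^ 2)
  have hR : thetaNome (-x ^ 2) * R = P := by
    have : P * (thetaNome (-x ^ 2) * R) = P * P := by linarith
    exact mul_left_cancel₀ hP.ne' this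
  have hS : thetaNome (-x) = 2 * y * P * R ^ 2 := by linarith
  calc 2 * y * P ^ 3 = 2 * y * P * (thetaNome (-x ^ 2) * R) ^ 2 := by rw [hR]; ring
    _ = thetaNome (-x ^ 2) ^ 2 * (2 * y * P * R ^ 2) := by ring
    _ = _ := by rw [← hmul, ← hS]; ring

theorem qPochR_mul_qPochR_pow_four_mul {p : ℝ} (hp0 : 0 < p) (hp1 : p < 1) :
    (qPochR p (p ^ 4) * qPochR (p ^ 3) (p ^ 4)) ^ 4 *
      (thetaNome (-p ^ 2) * qPochR (p ^ 4) (p ^ 4)) = thetaNome (-p) ^ 2 := by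
  have hx0 : 0 < p ^ 2 := by positivity
  have hx1 : p ^ 2 < 1 := pow_lt_one₀ hp0.le hp1 two_ne_zero
  have h₁ := qPochR_eq_mul_sq p hp0.le hp1
  have h₂ := qPochR_eq_mul_sq p hx0.le hx1
  have h₃ := thetaNome_neg_eq_qPochR hp0 hp1
  have h₄ := thetaNome_neg_eq_qPochR hx0 hx1
  have hX := qPochR_pos hx1 hx0.le hx1
  rw [← pow_mul, show p * p ^ 2 = p ^ 3 by ring] at h₂
  rw [← pow_mul] at h₄
  rw [← pow_two] at h₁
  rw [h₁] at h₃
  rw [h₄, ← h₂]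
  have h₅ : thetaNome (-p) = qPochR p (p ^ 2) ^ 2 * qPochR (p ^ 2) (p ^ 2) := by
    refine mul_right_cancel₀ hX.ne' ?_
    rw [h₃]; ring
  rw [h₅]; ring

theorem qGamma_quarter_mul_qGamma_three_quarters {p : ℝ} (hp0 : 0 < p) (hp1 : p < 1) :
    qGamma (p ^ 4) (1 / 4) * qGamma (p ^ 4) (3 / 4) =
      (1 - p ^ 4) * (qPochR (p ^ 4) (p ^ 4) ^ 2 /
        (qPochR p (p ^ 4) * qPochR (p ^ 3) (p ^ 4))) := by
  have hq1 : p ^ 4 < 1 := pow_lt_one₀ hp0.le hp1 four_ne_zero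
  have e₁ : (p ^ 4) ^ ((1 : ℝ) / 4) = p := by
    rw [← Real.rpow_natCast_mul hp0.le]; norm_num
  have e₂ : (p ^ 4) ^ ((3 : ℝ) / 4) = p ^ 3 := by
    rw [← Real.rpow_natCast_mul hp0.le, ← Real.rpow_natCast]; norm_num
  have e₃ : (1 - p ^ 4) ^ (1 - (1 : ℝ) / 4) * (1 - p ^ 4) ^ (1 - (3 : ℝ) / 4) = 1 - p ^ 4 := by
    rw [← Real.rpow_add (by linarith)]; norm_num
  rw [qGamma, qGamma, e₁, e₂]
  calc _ = ((1 - p ^ 4) ^ (1 - (1 : ℝ) / 4) * (1 - p ^ 4) ^ (1 - (3 : ℝ) / 4)) *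
        (qPochR (p ^ 4) (p ^ 4) ^ 2 / (qPochR p (p ^ 4) * qPochR (p ^ 3) (p ^ 4))) := by
        rw [sq, mul_div_mul_comm]; ring
    _ = _ := by rw [e₃]

theorem qGamma_quarter_product_exp_two_pi
    (q : ℝ) (hq : q = Real.exp (-2 * Real.pi))
    (a : ℝ) (ha : a = Real.pi ^ ((1 : ℝ) / 4) / Real.Gamma (3 / 4)) :
    qGamma q (1 / 4) * qGamma q (3 / 4) =
      (1 - Real.exp (-2 * Real.pi)) * a ^ 2 * (2 : ℝ) ^ (-(17 : ℝ) / 16) *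
        Real.exp (3 * Real.pi / 16) * (Real.sqrt 2 + 1) ^ ((1 : ℝ) / 4) := by
  have hp0 := Real.exp_pos (-Real.pi / 2)
  have hp1 := exp_neg_pi_div_two_lt_one
  have hpq : Real.exp (-2 * Real.pi) = Real.exp (-Real.pi / 2) ^ 4 := by
    rw [← Real.exp_nat_mul]; push_cast; ring_nf
  have hpx := exp_neg_pi_div_two_sq
  have hφ := thetaNome_neg_exp_neg_pi_div_two_sq
  have hA := thetaNome_exp_neg_pi_sq_eq_sqrt_two_mul
  have hP3 := two_mul_exp_mul_qPochR_pow_three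
  have hQ4 := qPochR_mul_qPochR_pow_four_mul hp0 hp1
  have ha0 := thetaNome_pos (Real.exp_pos _) exp_neg_pi_lt_one
  have hT0 := thetaNome_neg_pos (Real.exp_pos _) exp_neg_pi_lt_one
  have hy : Real.exp (3 * Real.pi / 16) ^ 8 * Real.exp (-Real.pi / 4) ^ 6 = 1 := by
    rw [← Real.exp_nat_mul, ← Real.exp_nat_mul, ← Real.exp_add, Real.exp_eq_one_iff]
    push_cast; ring
  have hy0 := Real.exp_pos (-Real.pi / 4)
  have hE0 := Real.exp_pos (3 * Real.pi / 16)
  rw [hq, hpq, qGamma_quarter_mul_qGamma_three_quarters hp0 hp1]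
  rw [← thetaNome_exp_neg_pi] at ha
  rw [← hpx] at hP3 hφ hA ha ha0 hT0
  rw [← pow_mul] at hP3
  have hq1 := pow_lt_one₀ hp0.le hp1 four_ne_zero
  have hP0 := qPochR_pos hq1 (by positivity) hq1
  have hQ0 := mul_pos (qPochR_pos hp1 (by positivity) hq1)
    (qPochR_pos (pow_lt_one₀ hp0.le hp1 three_ne_zero) (by positivity) hq1)
  rw [← ha] at hP3 hφ hA ha0
  set p := Real.exp (-Real.pi / 2)
  set P := qPochR (p ^ 4) (p ^ 4)
  set Q := qPochR p (p ^ 4) * qPochR (p ^ 3) (p ^ 4)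
  set b := thetaNome (-p ^ 2)
  set y := Real.exp (-Real.pi / 4)
  set E := Real.exp (3 * Real.pi / 16)
  have hs : √2 ^ 2 = (2 : ℝ) := Real.sq_sqrt zero_le_two
  have hs0 : 0 < √2 := by positivity
  set s := √2 with hs_def
  have h2 : ((2 : ℝ) ^ (-(17 : ℝ) / 16)) ^ 8 * (2 ^ 8 * s) = 1 := by
    rw [hs_def, Real.sqrt_eq_rpow, ← Real.rpow_natCast 2 8, ← Real.rpow_mul_natCast zero_le_two,
      ← Real.rpow_add two_pos, ← Real.rpow_add two_pos]
    norm_num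
  have hu : ((s + 1) ^ ((1 : ℝ) / 4)) ^ 8 = (s + 1) ^ 2 := by
    rw [← Real.rpow_mul_natCast (by positivity), ← Real.rpow_natCast]; norm_num
  have hc0 : 0 < (2 : ℝ) ^ (-(17 : ℝ) / 16) := by positivity
  have hu0 : 0 < (s + 1) ^ ((1 : ℝ) / 4) := by positivity
  set c := (2 : ℝ) ^ (-(17 : ℝ) / 16)
  set u := (s + 1) ^ ((1 : ℝ) / 4)
  suffices P ^ 2 / Q = a ^ 2 * c * E * u by rw [this]; ring
  refine (pow_left_inj₀ (by positivity) (by positivity) (n := 8) (by norm_num)).1 ?_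
  rw [div_pow, div_eq_iff (by positivity)]
  have hbase : 0 < b ^ 2 * P ^ 2 * (2 ^ 8 * s) * y ^ 6 := by positivity
  refine mul_right_cancel₀ hbase.ne' ?_
  have hQ8 : Q ^ 8 * (b ^ 2 * P ^ 2) = (a ^ 2 - b ^ 2) ^ 2 := by
    rw [← hφ, ← hQ4]; ring
  have hP18 : 2 ^ 6 * y ^ 6 * P ^ 18 = a ^ 6 * b ^ 12 := by
    calc _ = (2 * y * P ^ 3) ^ 6 := by ring
      _ = _ := by rw [hP3]; ring
  calc (P ^ 2) ^ 8 * (b ^ 2 * P ^ 2 * (2 ^ 8 * s) * y ^ 6)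
      = 4 * s * b ^ 2 * (2 ^ 6 * y ^ 6 * P ^ 18) := by ring
    _ = 4 * s * (a ^ 2) ^ 3 * (b ^ 2) ^ 7 := by rw [hP18]; ring
    _ = (a ^ 2) ^ 8 * (s + 1) ^ 2 * (a ^ 2 - b ^ 2) ^ 2 := by
      rw [hA]
      have h4 : s ^ 4 = 4 := by rw [show s ^ 4 = (s ^ 2) ^ 2 by ring, hs]; norm_num
      have h8 : s ^ 8 = 16 := by rw [show s ^ 8 = (s ^ 4) ^ 2 by ring, h4]; norm_num
      have h1 : (s + 1) * (s - 1) = 1 := by linarith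
      calc _ = 4 * s ^ 4 * (b ^ 2) ^ 10 := by ring
        _ = s ^ 8 * (b ^ 2) ^ 10 * ((s + 1) * (s - 1)) ^ 2 := by rw [h4, h8, h1]; ring
        _ = _ := by ring
    _ = (a ^ 2) ^ 8 * (c ^ 8 * (2 ^ 8 * s)) * (E ^ 8 * y ^ 6) * u ^ 8 *
        (Q ^ 8 * (b ^ 2 * P ^ 2)) := by rw [h2, hy, hu, hQ8]; ring
    _ = _ := by ring
end
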